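/- Let Θ(x,t) be the Giga–Kohn density of a backward self-similar solution u(x,t) = (-t)^{-1/(p-1)} w(x/√(-t)) centered at the space-time origin. If x₀ ∈ ℝ^n, t₀ ≤ 0, and Θ(x₀,t₀) = Θ(0,0), then for every real a and every (x,t) ∈ ℝ^n × (-∞,0), u(a x₀ + x, a² t₀ + t) = u(x,t); in particular u is invariant under translation by (x₀, t₀). -/

import Mathlib

open MeasureTheory Real Filter

noncomputable def lap {n : ℕ} (w : EuclideanSpace ℝ (Fin n) → ℝ)
    (y : EuclideanSpace ℝ (Fin n)) : ℝ :=
  ∑ i, fderiv ℝ (fun z => fderiv ℝ w z (EuclideanSpace.single i 1)) y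
      (EuclideanSpace.single i 1)

/-- The backward heat kernel `G(y,t) = (-4πt)^{-n/2} e^{|y|²/(4t)}`. -/
noncomputable def bkernel (n : ℕ) (y : EuclideanSpace ℝ (Fin n)) (t : ℝ) : ℝ :=
  (-4 * Real.pi * t) ^ (-(n : ℝ) / 2) * Real.exp (‖y‖ ^ 2 / (4 * t))

/-- The Giga–Kohn monotone energy `E(s; x, T, u)`. -/
noncomputable def GKenergy (n : ℕ) (p : ℝ)
    (u : EuclideanSpace ℝ (Fin n) → ℝ → ℝ) (s : ℝ)
    (x : EuclideanSpace ℝ (Fin n)) (T : ℝ) : ℝ :=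
  (1 / 2) * (-s) ^ ((p + 1) / (p - 1)) *
      (∫ y, ‖fderiv ℝ (fun z => u z (T + s)) y‖ ^ 2 * bkernel n (y - x) s)
    - (1 / (p + 1)) * (-s) ^ ((p + 1) / (p - 1)) *
      (∫ y, |u y (T + s)| ^ (p + 1) * bkernel n (y - x) s)
    + (1 / (2 * (p - 1))) * (-s) ^ (2 / (p - 1)) *
      (∫ y, (u y (T + s)) ^ 2 * bkernel n (y - x) s)

/-! In self-similar variables the Giga–Kohn energy `E(s; x₀, t₀, u)` is the energy
`½|∇w|² + Φ(w)` of the profile `w`, integrated against a Gaussian.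

For `t₀ = 0` that Gaussian has a fixed variance and its centre moves to infinity along the ray
`τ ↦ τ • x₀`. The self-similar equation makes the stress field `(½|∇w|² + Φ(w)) e - ⟪e, ∇w⟫ ∇w`
satisfy `div = -½ ⟪e, ∇w⟫ ⟪y, ∇w⟫`, so by the divergence theorem the derivative of the energy
along the ray is `-(τ / 2) ∫ ⟪x₀, ∇w⟫² ρ`. The energy therefore decreases from `Θ(0, 0)` at `τ = 0`
to `Θ(x₀, 0)` as `τ → ∞`; if these agree, then `⟪x₀, ∇w⟫ = 0` everywhere.

For `t₀ < 0` the Gaussians concentrate, their precision `κ` tending to infinity, and the energy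
carries a factor `(4κ)^{-(p+1)/(p-1)}`. A Caccioppoli estimate bounds the weighted energy of `w` by
a multiple of `κ`, so `Θ(x₀, t₀) ≤ 0`. Testing the equation with `w` identifies `Θ(0, 0)` with
`(1/2 - 1/(p+1)) ∫ |w|^{p+1} ρ`, and equality of the densities forces `w = 0`. -/

open scoped Gradient RealInnerProductSpace Topology

section Divergence

variable {E : Type*} [NormedAddCommGroup E] [NormedSpace ℝ E]

/-- The divergence `div X` of a vector field, defined without coordinates as the trace of its
derivative. It is `0` at points where `X` is not differentiable. -/
noncomputable def divergence (X : E → E) (y : E) : ℝ :=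
  LinearMap.trace ℝ E (fderiv ℝ X y)

variable {f : E → ℝ} {X Y : E → E} {y : E}

lemma divergence_sub (hX : DifferentiableAt ℝ X y) (hY : DifferentiableAt ℝ Y y) :
    divergence (fun z => X z - Y z) y = divergence X y - divergence Y y := by
  simp [divergence, fderiv_fun_sub hX hY]

lemma divergence_const (v : E) : divergence (fun _ => v) y = 0 := by
  simp [divergence]

variable [FiniteDimensional ℝ E]

lemma divergence_smul (hf : DifferentiableAt ℝ f y) (hX : DifferentiableAt ℝ X y) :
    divergence (fun z => f z • X z) y = f y * divergence X y + fderiv ℝ f y (X y) := by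
  simp [divergence, fderiv_fun_smul hf hX]

lemma divergence_sub_const (b : E) : divergence (fun z => z - b) y = Module.finrank ℝ E := by
  rw [divergence, fderiv_sub_const, fderiv_fun_id, ContinuousLinearMap.coe_id, LinearMap.trace_id]

lemma continuous_trace : Continuous fun T : E →L[ℝ] E => LinearMap.trace ℝ E T :=
  ((LinearMap.trace ℝ E).comp (ContinuousLinearMap.coeLM ℝ)).continuous_of_finiteDimensional

lemma continuous_divergence (hX : ContDiff ℝ 1 X) : Continuous (divergence X) :=
  continuous_trace.comp (hX.continuous_fderiv one_ne_zero)

variable [MeasurableSpace E] [BorelSpace E] {μ : Measure E} [μ.IsAddHaarMeasure]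

lemma integral_fderiv_eq_zero_of_hasCompactSupport (hX : ContDiff ℝ 1 X)
    (hc : HasCompactSupport X) : ∫ y, fderiv ℝ X y ∂μ = 0 := by
  have hi : Integrable (fderiv ℝ X) μ :=
    (hX.continuous_fderiv one_ne_zero).integrable_of_hasCompactSupport (hc.fderiv ℝ)
  ext v
  rw [ContinuousLinearMap.integral_apply hi]
  simpa using integral_smul_fderiv_eq_neg_fderiv_smul_of_integrable (μ := μ)
    (f := fun _ : E => (1 : ℝ)) (g := X) (v := v) (by simp)
    (by simpa using hi.apply_continuousLinearMap v)
    (by simpa using hX.continuous.integrable_of_hasCompactSupport hc)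
    (fun _ _ => differentiableAt_const _) (fun x _ => hX.differentiable one_ne_zero x)

lemma integrable_divergence_of_hasCompactSupport (hX : ContDiff ℝ 1 X)
    (hc : HasCompactSupport X) : Integrable (divergence X) μ :=
  (continuous_divergence hX).integrable_of_hasCompactSupport <|
    (hc.fderiv ℝ).mono fun y hy h => hy (by simp [divergence, h])

lemma integral_divergence_eq_zero_of_hasCompactSupport (hX : ContDiff ℝ 1 X)
    (hc : HasCompactSupport X) : ∫ y, divergence X y ∂μ = 0 := by
  let tr : (E →L[ℝ] E) →L[ℝ] ℝ :=
    ⟨(LinearMap.trace ℝ E).comp (ContinuousLinearMap.coeLM ℝ), continuous_trace⟩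
  have hi : Integrable (fderiv ℝ X) μ :=
    (hX.continuous_fderiv one_ne_zero).integrable_of_hasCompactSupport (hc.fderiv ℝ)
  calc ∫ y, divergence X y ∂μ = tr (∫ y, fderiv ℝ X y ∂μ) := tr.integral_comp_comm hi
    _ = 0 := by rw [integral_fderiv_eq_zero_of_hasCompactSupport hX hc, map_zero]

end Divergence

section Cutoff

variable {E : Type*} [NormedAddCommGroup E] [NormedSpace ℝ E] [FiniteDimensional ℝ E]

/-- A smooth cutoff function at scale `R`, equal to `1` on the ball of radius `R` around the origin
and to `0` outside the ball of radius `2 * R`; it is a rescaling of one fixed bump function. -/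
noncomputable def cutoff (E : Type*) [NormedAddCommGroup E] [NormedSpace ℝ E]
    [FiniteDimensional ℝ E] (R : ℝ) (y : E) : ℝ :=
  (⟨1, 2, one_pos, one_lt_two⟩ : ContDiffBump (0 : E)) (R⁻¹ • y)

variable {R : ℝ} {y : E}

lemma contDiff_cutoff {k : ℕ∞} : ContDiff ℝ k (cutoff E R) :=
  (ContDiffBump.contDiff _).comp (contDiff_const_smul _)

lemma hasCompactSupport_cutoff (hR : 0 < R) : HasCompactSupport (cutoff E R) :=
  (ContDiffBump.hasCompactSupport _).comp_smul (inv_ne_zero hR.ne')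

lemma cutoff_nonneg : 0 ≤ cutoff E R y :=
  ContDiffBump.nonneg _

lemma cutoff_le_one : cutoff E R y ≤ 1 :=
  ContDiffBump.le_one _

lemma cutoff_eq_one (hR : 0 < R) (hy : ‖y‖ ≤ R) : cutoff E R y = 1 := by
  refine ContDiffBump.one_of_mem_closedBall _ ?_
  rw [mem_closedBall_zero_iff, norm_smul, norm_inv, Real.norm_of_nonneg hR.le]
  exact (inv_mul_le_one₀ hR).2 hy

variable (E) in
lemma exists_norm_fderiv_cutoff_le :
    ∃ C, ∀ R > 0, ∀ y : E, ‖fderiv ℝ (cutoff E R) y‖ ≤ C * R⁻¹ := by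
  let χ : ContDiffBump (0 : E) := ⟨1, 2, one_pos, one_lt_two⟩
  obtain ⟨C, hC⟩ := (χ.hasCompactSupport.fderiv ℝ).exists_bound_of_continuous
    (χ.contDiff.continuous_fderiv one_ne_zero)
  refine ⟨C, fun R hR y => ?_⟩
  have h : fderiv ℝ (cutoff E R) y = R⁻¹ • fderiv ℝ χ (R⁻¹ • y) := fderiv_comp_smul _
  rw [h, norm_smul, norm_inv, Real.norm_of_nonneg hR.le, mul_comm]
  gcongr
  exact hC _

lemma tendsto_cutoff_atTop (y : E) : Tendsto (fun R => cutoff E R y) atTop (𝓝 1) :=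
  tendsto_const_nhds.congr' <| by
    filter_upwards [eventually_gt_atTop 0, eventually_ge_atTop ‖y‖] with R hR hy
    exact (cutoff_eq_one hR hy).symm

lemma tendsto_integral_fderiv_cutoff [MeasurableSpace E] {μ : Measure E} {X : E → E}
    (hi : Integrable X μ) :
    Tendsto (fun R => ∫ y, fderiv ℝ (cutoff E R) y (X y) ∂μ) atTop (𝓝 0) := by
  obtain ⟨C, hC⟩ := exists_norm_fderiv_cutoff_le E
  have hlim : Tendsto (fun R : ℝ => C * R⁻¹ * ∫ y, ‖X y‖ ∂μ) atTop (𝓝 0) := by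
    simpa using (tendsto_inv_atTop_zero.const_mul C).mul_const (∫ y, ‖X y‖ ∂μ)
  refine squeeze_zero_norm' ?_ hlim
  filter_upwards [eventually_gt_atTop 0] with R hR
  rw [← integral_const_mul]
  refine norm_integral_le_of_norm_le (hi.norm.const_mul _) (Eventually.of_forall fun y => ?_)
  exact (ContinuousLinearMap.le_opNorm _ _).trans
    (mul_le_mul_of_nonneg_right (hC R hR y) (norm_nonneg _))

end Cutoff

section DivergenceTheorem

variable {E : Type*} [NormedAddCommGroup E] [NormedSpace ℝ E] [FiniteDimensional ℝ E]
  [MeasurableSpace E] [BorelSpace E] {μ : Measure E} [μ.IsAddHaarMeasure] {X : E → E}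

lemma integral_mul_divergence_eq_neg {φ : E → ℝ} (hφ : ContDiff ℝ 1 φ)
    (hc : HasCompactSupport φ) (hX : ContDiff ℝ 1 X) :
    ∫ y, φ y * divergence X y ∂μ = -∫ y, fderiv ℝ φ y (X y) ∂μ := by
  have h := integral_divergence_eq_zero_of_hasCompactSupport (μ := μ) (hφ.smul hX) hc.smul_right
  have hdiv : divergence (fun y => φ y • X y) =
      fun y => φ y * divergence X y + fderiv ℝ φ y (X y) := funext fun y =>
    divergence_smul (hφ.differentiable one_ne_zero y) (hX.differentiable one_ne_zero y)
  have hi₁ : Integrable (fun y => φ y * divergence X y) μ :=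
    (hφ.continuous.mul (continuous_divergence hX)).integrable_of_hasCompactSupport hc.mul_right
  have hi₂ : Integrable (fun y => fderiv ℝ φ y (X y)) μ :=
    ((hφ.continuous_fderiv one_ne_zero).clm_apply hX.continuous).integrable_of_hasCompactSupport
      ((hc.fderiv ℝ).mono fun y hy h => hy (by simp [h]))
  rw [← add_eq_zero_iff_eq_neg, ← integral_add hi₁ hi₂, ← hdiv]
  exact h

theorem integral_divergence_eq_zero (hX : ContDiff ℝ 1 X) (hi : Integrable X μ)
    (hd : Integrable (divergence X) μ) : ∫ y, divergence X y ∂μ = 0 := by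
  have hlim : Tendsto (fun R => ∫ y, cutoff E R y * divergence X y ∂μ) atTop
      (𝓝 (∫ y, divergence X y ∂μ)) := by
    refine tendsto_integral_filter_of_dominated_convergence (fun y => ‖divergence X y‖)
      (Eventually.of_forall fun R =>
        (contDiff_cutoff (k := 0)).continuous.aestronglyMeasurable.mul hd.aestronglyMeasurable)
      (Eventually.of_forall fun R => Eventually.of_forall fun y => ?_) hd.norm
      (Eventually.of_forall fun y => by simpa using (tendsto_cutoff_atTop y).mul_const _)
    rw [norm_mul, Real.norm_of_nonneg cutoff_nonneg]
    exact mul_le_of_le_one_left (norm_nonneg _) cutoff_le_one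
  refine tendsto_nhds_unique hlim ?_
  rw [← neg_zero]
  refine (tendsto_integral_fderiv_cutoff hi).neg.congr' ?_
  filter_upwards [eventually_gt_atTop 0] with R hR
  exact (integral_mul_divergence_eq_neg contDiff_cutoff (hasCompactSupport_cutoff hR) hX).symm

end DivergenceTheorem

section Gradient

variable {E : Type*} [NormedAddCommGroup E] [InnerProductSpace ℝ E] [CompleteSpace E] {f : E → ℝ}

lemma norm_gradient (f : E → ℝ) (y : E) : ‖∇ f y‖ = ‖fderiv ℝ f y‖ := by
  rw [← toDual_gradient, LinearIsometryEquiv.norm_map]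

lemma contDiff_gradient (hf : ContDiff ℝ 2 f) : ContDiff ℝ 1 (∇ f) :=
  (InnerProductSpace.toDual ℝ E).symm.contDiff.comp (hf.fderiv_right one_add_one_eq_two.le)

lemma inner_fderiv_gradient (hf : ContDiff ℝ 2 f) (y u v : E) :
    ⟪fderiv ℝ (∇ f) y u, v⟫ = fderiv ℝ (fun z => fderiv ℝ f z v) y u := by
  have h : (fun z => fderiv ℝ f z v) = fun z => ⟪∇ f z, v⟫ :=
    funext fun _ => inner_gradient_left.symm
  rw [h, fderiv_inner_apply ℝ ((contDiff_gradient hf).differentiable one_ne_zero y)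
    (differentiableAt_const v)]
  simp

lemma inner_fderiv_gradient_comm (hf : ContDiff ℝ 2 f) (y u v : E) :
    ⟪fderiv ℝ (∇ f) y u, v⟫ = ⟪fderiv ℝ (∇ f) y v, u⟫ := by
  have hdiff : DifferentiableAt ℝ (fderiv ℝ f) y :=
    (hf.fderiv_right one_add_one_eq_two.le).differentiable one_ne_zero y
  have hfderiv (u v : E) : ⟪fderiv ℝ (∇ f) y u, v⟫ = fderiv ℝ (fderiv ℝ f) y u v := by
    rw [inner_fderiv_gradient hf, fderiv_clm_apply hdiff (differentiableAt_const v)]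
    simp
  rw [hfderiv, hfderiv, hf.contDiffAt.isSymmSndFDerivAt (by simp)]

end Gradient

section Caccioppoli

variable {E : Type*} [NormedAddCommGroup E] [InnerProductSpace ℝ E] [FiniteDimensional ℝ E]
  {ρ w f φ : E → ℝ} {W : E → E}

lemma divergence_smul_smul_gradient {ψ : E → ℝ} {y : E} (hψ : ContDiff ℝ 1 ψ) (hρ : ContDiff ℝ 1 ρ)
    (hw : ContDiff ℝ 2 w) :
    divergence (fun z => ψ z • ρ z • ∇ w z) y =
      ψ y * divergence (fun z => ρ z • ∇ w z) y + ρ y * ⟪∇ ψ y, ∇ w y⟫ := by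
  rw [divergence_smul (X := fun z => ρ z • ∇ w z) (hψ.differentiable one_ne_zero y)
    ((hρ.smul (contDiff_gradient hw)).differentiable one_ne_zero y), map_smul, smul_eq_mul,
    inner_gradient_left]

lemma gradient_sq_mul {y : E} (hφ : DifferentiableAt ℝ φ y) (hw : DifferentiableAt ℝ w y) :
    ∇ (fun z => φ z ^ 2 * w z) y = (2 * φ y * w y) • ∇ φ y + φ y ^ 2 • ∇ w y := by
  refine (InnerProductSpace.toDual ℝ E).injective ?_
  simp only [map_add, map_smul, toDual_gradient]
  rw [fderiv_fun_mul (hφ.fun_pow 2) hw, fderiv_fun_pow 2 hφ]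
  ext v
  simp
  ring

/- Testing the equation with `φ ^ 2 * w` leaves the cross term `φ w ⟪2 ∇φ + φ W, ∇w⟫`, which is
absorbed by completing a square. -/
lemma caccioppoli_pointwise (hρ : ContDiff ℝ 1 ρ) (hw : ContDiff ℝ 2 w) (hφ : ContDiff ℝ 1 φ)
    {y : E} (hρ₀ : 0 ≤ ρ y) (hφ₀ : 0 ≤ φ y) (hφ₁ : φ y ≤ 1)
    (heq : divergence (fun z => ρ z • ∇ w z) y = ρ y * (f y + ⟪W y, ∇ w y⟫)) :
    φ y ^ 2 * (‖∇ w y‖ ^ 2 * ρ y) ≤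
      2 * divergence (fun z => (φ z ^ 2 * w z) • ρ z • ∇ w z) y +
        (2 * (|w y * f y| * ρ y) + 2 * (w y ^ 2 * ‖W y‖ ^ 2 * ρ y) +
          8 * ‖∇ φ y‖ ^ 2 * (w y ^ 2 * ρ y)) := by
  have hw₁ := hw.of_le one_le_two
  rw [divergence_smul_smul_gradient ((hφ.pow 2).mul hw₁) hρ hw, heq,
    gradient_sq_mul (hφ.differentiable one_ne_zero y) (hw₁.differentiable one_ne_zero y),
    inner_add_left, real_inner_smul_left, real_inner_smul_left, real_inner_self_eq_norm_sq]
  have hφsq : φ y ^ 2 ≤ 1 := pow_le_one₀ hφ₀ hφ₁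
  have hsource : -|w y * f y| ≤ φ y ^ 2 * (w y * f y) :=
    (neg_le_neg (mul_le_of_le_one_left (abs_nonneg _) hφsq)).trans <| by
      rw [← mul_neg]
      exact mul_le_mul_of_nonneg_left (neg_abs_le _) (sq_nonneg _)
  have hQ : ‖(2 : ℝ) • ∇ φ y + φ y • W y‖ ^ 2 ≤ 8 * ‖∇ φ y‖ ^ 2 + 2 * ‖W y‖ ^ 2 := by
    have h₁ := parallelogram_law_with_norm ℝ ((2 : ℝ) • ∇ φ y) (φ y • W y)
    have h₂ : ‖φ y • W y‖ ^ 2 ≤ ‖W y‖ ^ 2 := by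
      rw [norm_smul, mul_pow, Real.norm_eq_abs, sq_abs]
      exact mul_le_of_le_one_left (sq_nonneg _) hφsq
    have h₃ : ‖(2 : ℝ) • ∇ φ y‖ = 2 * ‖∇ φ y‖ := by simp [norm_smul]
    rw [h₃] at h₁
    nlinarith [sq_nonneg ‖(2 : ℝ) • ∇ φ y - φ y • W y‖]
  have hsquare : 0 ≤ φ y ^ 2 * ‖∇ w y‖ ^ 2 + 2 * φ y * w y *
      (2 * ⟪∇ φ y, ∇ w y⟫ + φ y * ⟪W y, ∇ w y⟫) +
      w y ^ 2 * ‖(2 : ℝ) • ∇ φ y + φ y • W y‖ ^ 2 := by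
    refine (sq_nonneg ‖φ y • ∇ w y + w y • ((2 : ℝ) • ∇ φ y + φ y • W y)‖).trans_eq ?_
    rw [norm_add_sq_real, norm_smul, norm_smul, mul_pow, mul_pow, Real.norm_eq_abs,
      Real.norm_eq_abs, sq_abs, sq_abs]
    simp only [inner_add_right, real_inner_smul_left, real_inner_smul_right,
      real_inner_comm (∇ w y)]
    ring
  nlinarith [mul_nonneg hρ₀ hsquare, mul_le_mul_of_nonneg_left hsource hρ₀,
    mul_le_mul_of_nonneg_left hQ (mul_nonneg hρ₀ (sq_nonneg (w y)))]

variable [MeasurableSpace E] [BorelSpace E] {μ : Measure E}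

lemma integrable_and_integral_le_of_forall_ball [IsFiniteMeasureOnCompacts μ] {g : E → ℝ}
    (hg : Continuous g) (hg₀ : ∀ y, 0 ≤ g y) {B : ℝ → ℝ} {A : ℝ} (hB : Tendsto B atTop (𝓝 A))
    (h : ∀ R > 0, ∫ y in Metric.closedBall 0 R, g y ∂μ ≤ B R) :
    Integrable g μ ∧ ∫ y, g y ∂μ ≤ A := by
  have hcover : AECover μ atTop fun R : ℝ => Metric.closedBall (0 : E) R :=
    aecover_closedBall tendsto_id
  have hi : Integrable g μ := by
    refine hcover.integrable_of_integral_bounded_of_nonneg_ae (A + 1)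
      (fun R => hg.continuousOn.integrableOn_compact (isCompact_closedBall 0 R))
      (Eventually.of_forall hg₀) ?_
    filter_upwards [eventually_gt_atTop 0, hB.eventually_lt_const (lt_add_one A)] with R hR hBR
    exact (h R hR).trans hBR.le
  exact ⟨hi, le_of_tendsto_of_tendsto (hcover.integral_tendsto_of_countably_generated hi) hB
    ((eventually_gt_atTop 0).mono h)⟩

variable [μ.IsAddHaarMeasure]

lemma integral_sq_mul_norm_gradient_sq_le (hρ : ContDiff ℝ 1 ρ) (hρ₀ : ∀ y, 0 ≤ ρ y)
    (hw : ContDiff ℝ 2 w)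
    (heq : ∀ y, divergence (fun z => ρ z • ∇ w z) y = ρ y * (f y + ⟪W y, ∇ w y⟫))
    (hif : Integrable (fun y => |w y * f y| * ρ y) μ)
    (hiW : Integrable (fun y => w y ^ 2 * ‖W y‖ ^ 2 * ρ y) μ)
    (hiw : Integrable (fun y => w y ^ 2 * ρ y) μ)
    (hφ : ContDiff ℝ 1 φ) (hφc : HasCompactSupport φ) (hφ₀ : ∀ y, 0 ≤ φ y) (hφ₁ : ∀ y, φ y ≤ 1)
    {δ : ℝ} (hδ : ∀ y, ‖∇ φ y‖ ≤ δ) :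
    ∫ y, φ y ^ 2 * (‖∇ w y‖ ^ 2 * ρ y) ∂μ ≤
      2 * ∫ y, |w y * f y| * ρ y ∂μ + 2 * ∫ y, w y ^ 2 * ‖W y‖ ^ 2 * ρ y ∂μ +
        8 * δ ^ 2 * ∫ y, w y ^ 2 * ρ y ∂μ := by
  set Z : E → E := fun y => (φ y ^ 2 * w y) • ρ y • ∇ w y with hZdef
  have hφc₂ : HasCompactSupport fun y => φ y ^ 2 := hφc.comp_left (zero_pow two_ne_zero)
  have hZ : ContDiff ℝ 1 Z :=
    ((hφ.pow 2).mul (hw.of_le one_le_two)).smul (hρ.smul (contDiff_gradient hw))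
  have hZc : HasCompactSupport Z :=
    hφc₂.mono fun y hy h => hy (by simp [hZdef, h])
  have hiZ : Integrable (divergence Z) μ := integrable_divergence_of_hasCompactSupport hZ hZc
  have hiφ : Integrable (fun y => φ y ^ 2 * (‖∇ w y‖ ^ 2 * ρ y)) μ :=
    ((hφ.continuous.pow 2).mul (((contDiff_gradient hw).continuous.norm.pow 2).mul
      hρ.continuous)).integrable_of_hasCompactSupport hφc₂.mul_right
  have hifW : Integrable (fun y => 2 * (|w y * f y| * ρ y) + 2 * (w y ^ 2 * ‖W y‖ ^ 2 * ρ y)) μ :=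
    (hif.const_mul 2).add (hiW.const_mul 2)
  have hi : Integrable (fun y => 2 * (|w y * f y| * ρ y) + 2 * (w y ^ 2 * ‖W y‖ ^ 2 * ρ y) +
      8 * δ ^ 2 * (w y ^ 2 * ρ y)) μ := hifW.add (hiw.const_mul _)
  calc ∫ y, φ y ^ 2 * (‖∇ w y‖ ^ 2 * ρ y) ∂μ
      ≤ ∫ y, 2 * divergence Z y + (2 * (|w y * f y| * ρ y) + 2 * (w y ^ 2 * ‖W y‖ ^ 2 * ρ y) +
          8 * δ ^ 2 * (w y ^ 2 * ρ y)) ∂μ := by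
        refine integral_mono hiφ ((hiZ.const_mul 2).add hi) fun y => ?_
        refine (caccioppoli_pointwise hρ hw hφ (hρ₀ y) (hφ₀ y) (hφ₁ y) (heq y)).trans ?_
        have := mul_nonneg (sq_nonneg (w y)) (hρ₀ y)
        gcongr
        exact hδ y
    _ = _ := by
        rw [integral_add (hiZ.const_mul 2) hi, integral_const_mul,
          integral_divergence_eq_zero_of_hasCompactSupport hZ hZc, mul_zero, zero_add,
          integral_add hifW (hiw.const_mul _), integral_add (hif.const_mul 2) (hiW.const_mul 2),
          integral_const_mul, integral_const_mul, integral_const_mul]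

theorem caccioppoli (hρ : ContDiff ℝ 1 ρ) (hρ₀ : ∀ y, 0 ≤ ρ y) (hw : ContDiff ℝ 2 w)
    (heq : ∀ y, divergence (fun z => ρ z • ∇ w z) y = ρ y * (f y + ⟪W y, ∇ w y⟫))
    (hif : Integrable (fun y => |w y * f y| * ρ y) μ)
    (hiW : Integrable (fun y => w y ^ 2 * ‖W y‖ ^ 2 * ρ y) μ)
    (hiw : Integrable (fun y => w y ^ 2 * ρ y) μ) :
    Integrable (fun y => ‖∇ w y‖ ^ 2 * ρ y) μ ∧
      ∫ y, ‖∇ w y‖ ^ 2 * ρ y ∂μ ≤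
        2 * ∫ y, |w y * f y| * ρ y ∂μ + 2 * ∫ y, w y ^ 2 * ‖W y‖ ^ 2 * ρ y ∂μ := by
  obtain ⟨C, hC⟩ := exists_norm_fderiv_cutoff_le E
  have hcont : Continuous fun y => ‖∇ w y‖ ^ 2 * ρ y :=
    ((contDiff_gradient hw).continuous.norm.pow 2).mul hρ.continuous
  have hnonneg : ∀ y, 0 ≤ ‖∇ w y‖ ^ 2 * ρ y := fun y => mul_nonneg (sq_nonneg _) (hρ₀ y)
  have hlim : Tendsto (fun R : ℝ => 2 * ∫ y, |w y * f y| * ρ y ∂μ +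
      2 * ∫ y, w y ^ 2 * ‖W y‖ ^ 2 * ρ y ∂μ + 8 * (C * R⁻¹) ^ 2 * ∫ y, w y ^ 2 * ρ y ∂μ) atTop
      (𝓝 (2 * ∫ y, |w y * f y| * ρ y ∂μ + 2 * ∫ y, w y ^ 2 * ‖W y‖ ^ 2 * ρ y ∂μ)) := by
    simpa using tendsto_const_nhds.add
      ((((tendsto_inv_atTop_zero.const_mul C).pow 2).const_mul 8).mul_const _)
  refine integrable_and_integral_le_of_forall_ball hcont hnonneg hlim fun R hR => ?_
  have hφc : HasCompactSupport fun y => cutoff E R y ^ 2 :=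
    (hasCompactSupport_cutoff hR).mono fun y hy h => hy (by simp [h])
  have hφ : ContDiff ℝ 1 (cutoff E R) := contDiff_cutoff (k := 1)
  calc ∫ y in Metric.closedBall 0 R, ‖∇ w y‖ ^ 2 * ρ y ∂μ
      = ∫ y in Metric.closedBall 0 R, cutoff E R y ^ 2 * (‖∇ w y‖ ^ 2 * ρ y) ∂μ :=
        setIntegral_congr_fun Metric.isClosed_closedBall.measurableSet fun y hy => by
          simp [cutoff_eq_one hR (mem_closedBall_zero_iff.1 hy)]
    _ ≤ ∫ y, cutoff E R y ^ 2 * (‖∇ w y‖ ^ 2 * ρ y) ∂μ :=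
        setIntegral_le_integral
          (((hφ.continuous.pow 2).mul
            hcont).integrable_of_hasCompactSupport hφc.mul_right)
          (Eventually.of_forall fun y => mul_nonneg (sq_nonneg _) (hnonneg y))
    _ ≤ _ := integral_sq_mul_norm_gradient_sq_le hρ hρ₀ hw heq hif hiW hiw hφ
        (hasCompactSupport_cutoff hR) (fun _ => cutoff_nonneg) (fun _ => cutoff_le_one)
        fun y => (norm_gradient _ y).trans_le (hC R hR y)

end Caccioppoli

section GaussianDensity

variable {E : Type*} [NormedAddCommGroup E] [InnerProductSpace ℝ E] {κ : ℝ} {b y : E}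

/-- The density `(κ / π) ^ (d / 2) * exp (-κ ‖y - b‖ ^ 2)` of the Gaussian probability measure with
centre `b` and covariance `(2 κ)⁻¹ • 1`, where `d` is the dimension of the space. In self-similar
variables the backward heat kernel takes this form with `κ = 1 / 4`. -/
noncomputable def gaussianDensity (κ : ℝ) (b y : E) : ℝ :=
  (κ / π) ^ ((Module.finrank ℝ E : ℝ) / 2) * exp (-κ * ‖y - b‖ ^ 2)

lemma gaussianDensity_pos (hκ : 0 < κ) (b y : E) : 0 < gaussianDensity κ b y :=
  mul_pos (rpow_pos_of_pos (div_pos hκ pi_pos) _) (exp_pos _)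

lemma contDiff_gaussianDensity {k : ℕ∞} (κ : ℝ) (b : E) : ContDiff ℝ k (gaussianDensity κ b) :=
  contDiff_const.mul (((contDiff_id.sub contDiff_const).norm_sq ℝ).const_smul (-κ)).exp

lemma continuous_gaussianDensity (κ : ℝ) (b : E) : Continuous (gaussianDensity κ b) :=
  (contDiff_gaussianDensity (k := 0) κ b).continuous

lemma fderiv_gaussianDensity_apply (v : E) :
    fderiv ℝ (gaussianDensity κ b) y v = -(2 * κ * ⟪y - b, v⟫ * gaussianDensity κ b y) := by
  have h : HasFDerivAt (gaussianDensity κ b) _ y :=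
    ((((hasFDerivAt_id y).sub_const b).norm_sq.const_mul (-κ)).exp.const_mul
      ((κ / π) ^ ((Module.finrank ℝ E : ℝ) / 2)))
  rw [h.fderiv, gaussianDensity]
  simp [-neg_mul, inner_sub_left]
  ring

lemma divergence_gaussianDensity_smul [FiniteDimensional ℝ E] {X : E → E}
    (hX : DifferentiableAt ℝ X y) :
    divergence (fun z => gaussianDensity κ b z • X z) y =
      gaussianDensity κ b y * (divergence X y - 2 * κ * ⟪y - b, X y⟫) := by
  rw [divergence_smul ((contDiff_gaussianDensity (k := 1) κ b).differentiable one_ne_zero y) hX,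
    fderiv_gaussianDensity_apply]
  ring

lemma hasDerivAt_gaussianDensity_center (κ : ℝ) (e y : E) (τ : ℝ) :
    HasDerivAt (fun τ : ℝ => gaussianDensity κ (τ • e) y)
      (2 * κ * ⟪y - τ • e, e⟫ * gaussianDensity κ (τ • e) y) τ := by
  have h : HasDerivAt (fun τ : ℝ => y - τ • e) (-e) τ := by
    simpa using ((hasDerivAt_id τ).smul_const e).const_sub y
  refine ((h.norm_sq.const_mul (-κ)).exp.const_mul _).congr_deriv ?_
  rw [gaussianDensity, inner_neg_right]
  ring

/- The factor `4` leaves room both for the quadratic weight and for moving the centre. -/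
lemma exists_one_add_norm_sq_mul_gaussianDensity_le (E : Type*) [NormedAddCommGroup E]
    [InnerProductSpace ℝ E] (hκ : 0 < κ) (R : ℝ) :
    ∃ C, ∀ b : E, ‖b‖ ≤ R → ∀ y,
      (1 + ‖y - b‖ ^ 2) * gaussianDensity κ b y ≤ C * gaussianDensity (κ / 4) 0 y := by
  set A := (κ / π) ^ ((Module.finrank ℝ E : ℝ) / 2)
  have : 0 < (κ / 4 / π) ^ ((Module.finrank ℝ E : ℝ) / 2) := by positivity
  refine ⟨A / (κ / 4 / π) ^ ((Module.finrank ℝ E : ℝ) / 2) * ((1 + 2 / κ) * exp (κ / 2 * R ^ 2)),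
    fun b hb y => ?_⟩
  have hweight : (1 + ‖y - b‖ ^ 2) * exp (-(κ / 2 * ‖y - b‖ ^ 2)) ≤ 1 + 2 / κ := by
    have h₁ : exp (-(κ / 2 * ‖y - b‖ ^ 2)) ≤ 1 := exp_le_one_iff.2 (neg_nonpos.2 (by positivity))
    have h₂ : κ / 2 * ‖y - b‖ ^ 2 * exp (-(κ / 2 * ‖y - b‖ ^ 2)) ≤ 1 :=
      (mul_exp_neg_le_exp_neg_one _).trans (exp_le_one_iff.2 (by norm_num))
    have h₃ : ‖y - b‖ ^ 2 * exp (-(κ / 2 * ‖y - b‖ ^ 2)) ≤ 2 / κ := by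
      rw [le_div_iff₀ hκ]
      linarith
    linarith
  have hcenter : exp (-(κ / 2 * ‖y - b‖ ^ 2)) ≤
      exp (κ / 2 * R ^ 2) * exp (-(κ / 4) * ‖y - 0‖ ^ 2) := by
    rw [← exp_add, exp_le_exp, sub_zero]
    have h : ‖y‖ ^ 2 ≤ 2 * ‖y - b‖ ^ 2 + 2 * R ^ 2 := by
      have := norm_le_norm_sub_add y b
      nlinarith [norm_nonneg y, norm_nonneg b, sq_nonneg (‖y - b‖ - R), norm_nonneg (y - b)]
    nlinarith
  calc (1 + ‖y - b‖ ^ 2) * gaussianDensity κ b y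
      = A * ((1 + ‖y - b‖ ^ 2) * exp (-(κ / 2 * ‖y - b‖ ^ 2)) *
          exp (-(κ / 2 * ‖y - b‖ ^ 2))) := by
        have h : -κ * ‖y - b‖ ^ 2 = -(κ / 2 * ‖y - b‖ ^ 2) + -(κ / 2 * ‖y - b‖ ^ 2) := by ring
        rw [gaussianDensity, h, exp_add]
        ring
    _ ≤ A * ((1 + 2 / κ) * (exp (κ / 2 * R ^ 2) * exp (-(κ / 4) * ‖y - 0‖ ^ 2))) := by
        gcongr
    _ = _ := by
        rw [gaussianDensity]
        field_simp

lemma gaussianDensity_smul {r : ℝ} (hr : 0 < r) (hκ : 0 ≤ κ) (b y : E) :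
    gaussianDensity (κ / r ^ 2) (r • b) (r • y) =
      (r ^ Module.finrank ℝ E)⁻¹ * gaussianDensity κ b y := by
  have hexp : -(κ / r ^ 2) * ‖r • y - r • b‖ ^ 2 = -κ * ‖y - b‖ ^ 2 := by
    rw [← smul_sub, norm_smul, mul_pow, Real.norm_of_nonneg hr.le]
    field_simp
  have hpow : (κ / r ^ 2 / π) ^ ((Module.finrank ℝ E : ℝ) / 2) =
      (r ^ Module.finrank ℝ E)⁻¹ * (κ / π) ^ ((Module.finrank ℝ E : ℝ) / 2) := by
    rw [div_right_comm, div_rpow (by positivity) (by positivity), ← rpow_natCast r 2,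
      ← rpow_mul hr.le, div_eq_inv_mul, ← rpow_natCast]
    congr 3
    push_cast
    ring
  rw [gaussianDensity, hexp, hpow, gaussianDensity, mul_assoc]

variable [FiniteDimensional ℝ E] [MeasurableSpace E] [BorelSpace E]

lemma integral_gaussianDensity (hκ : 0 < κ) (b : E) : ∫ y, gaussianDensity κ b y = 1 := by
  simp only [gaussianDensity]
  rw [integral_const_mul, integral_sub_right_eq_self (fun y : E => exp (-κ * ‖y‖ ^ 2)),
    GaussianFourier.integral_rexp_neg_mul_sq_norm hκ, ← mul_rpow (by positivity) (by positivity),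
    div_mul_div_cancel₀ pi_ne_zero, div_self hκ.ne', one_rpow]

lemma integrable_gaussianDensity (hκ : 0 < κ) (b : E) : Integrable (gaussianDensity κ b) :=
  .of_integral_ne_zero <| by simp [integral_gaussianDensity hκ]

lemma integrable_mul_gaussianDensity (hκ : 0 < κ) {g : E → ℝ} (hg : Continuous g) {B : ℝ}
    (hB : ∀ y, |g y| ≤ B * (1 + ‖y - b‖ ^ 2)) :
    Integrable fun y => g y * gaussianDensity κ b y := by
  obtain ⟨C, hC⟩ := exists_one_add_norm_sq_mul_gaussianDensity_le E hκ ‖b‖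
  have hB₀ : 0 ≤ B := by simpa using (abs_nonneg _).trans (hB b)
  refine ((integrable_gaussianDensity (by positivity : 0 < κ / 4) (0 : E)).const_mul
    (B * C)).mono' (hg.mul (continuous_gaussianDensity κ b)).aestronglyMeasurable
    (Eventually.of_forall fun y => ?_)
  have hρ := gaussianDensity_pos hκ b y
  calc ‖g y * gaussianDensity κ b y‖ = |g y| * gaussianDensity κ b y := by
        rw [norm_mul, Real.norm_eq_abs, Real.norm_of_nonneg hρ.le]
    _ ≤ B * (1 + ‖y - b‖ ^ 2) * gaussianDensity κ b y := by gcongr; exact hB y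
    _ ≤ B * C * gaussianDensity (κ / 4) 0 y := by
        rw [mul_assoc, mul_assoc]
        exact mul_le_mul_of_nonneg_left (hC b le_rfl y) hB₀

lemma integrable_bounded_mul_gaussianDensity (hκ : 0 < κ) {g : E → ℝ} (hg : Continuous g) {B : ℝ}
    (hB : ∀ y, |g y| ≤ B) : Integrable fun y => g y * gaussianDensity κ b y :=
  integrable_mul_gaussianDensity hκ hg fun y => (hB y).trans <|
    le_mul_of_one_le_right ((abs_nonneg _).trans (hB y)) (by simp)

lemma integral_mul_gaussianDensity_le (hκ : 0 < κ) {g : E → ℝ} {B : ℝ}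
    (hi : Integrable fun y => g y * gaussianDensity κ b y) (hB : ∀ y, g y ≤ B) :
    ∫ y, g y * gaussianDensity κ b y ≤ B := by
  calc ∫ y, g y * gaussianDensity κ b y ≤ ∫ y, B * gaussianDensity κ b y :=
        integral_mono hi ((integrable_gaussianDensity hκ b).const_mul B) fun y =>
          mul_le_mul_of_nonneg_right (hB y) (gaussianDensity_pos hκ b y).le
    _ = B := by rw [integral_const_mul, integral_gaussianDensity hκ, mul_one]

lemma integrable_norm_sub_sq_mul_gaussianDensity (hκ : 0 < κ) (b : E) :
    Integrable fun y => ‖y - b‖ ^ 2 * gaussianDensity κ b y :=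
  integrable_mul_gaussianDensity hκ (B := 1) (by fun_prop) fun y => by simp

lemma integral_norm_sub_sq_mul_gaussianDensity (hκ : 0 < κ) (b : E) :
    ∫ y, ‖y - b‖ ^ 2 * gaussianDensity κ b y = Module.finrank ℝ E / (2 * κ) := by
  have hdiv : divergence (fun y => gaussianDensity κ b y • (y - b)) = fun y =>
      Module.finrank ℝ E * gaussianDensity κ b y -
        2 * κ * (‖y - b‖ ^ 2 * gaussianDensity κ b y) := by
    funext y
    rw [divergence_gaussianDensity_smul (by fun_prop), divergence_sub_const,
      real_inner_self_eq_norm_sq]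
    ring
  have hi₁ := (integrable_gaussianDensity hκ b).const_mul (Module.finrank ℝ E : ℝ)
  have hi₂ := (integrable_norm_sub_sq_mul_gaussianDensity hκ b).const_mul (2 * κ)
  have hX : Integrable fun y => gaussianDensity κ b y • (y - b) := by
    have h : Integrable fun y => ‖y - b‖ * gaussianDensity κ b y :=
      integrable_mul_gaussianDensity hκ (B := 1) (by fun_prop) fun y => by
        rw [abs_norm]
        nlinarith [sq_nonneg (‖y - b‖ - 1)]
    refine h.mono' ((continuous_gaussianDensity κ b).smul
      (continuous_id.sub continuous_const)).aestronglyMeasurable (Eventually.of_forall fun y => ?_)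
    rw [norm_smul, Real.norm_of_nonneg (gaussianDensity_pos hκ b y).le, mul_comm]
  have hC₁ : ContDiff ℝ 1 fun y => gaussianDensity κ b y • (y - b) :=
    (contDiff_gaussianDensity κ b).smul (contDiff_id.sub contDiff_const)
  have h := integral_divergence_eq_zero hC₁ hX (hdiv ▸ hi₁.sub hi₂)
  rw [hdiv, integral_sub hi₁ hi₂, integral_const_mul, integral_const_mul,
    integral_gaussianDensity hκ] at h
  field_simp
  linarith

lemma integral_comp_smul_mul_gaussianDensity {r : ℝ} (hr : 0 < r) (hκ : 0 ≤ κ) (g : E → ℝ) :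
    ∫ y, g (r • y) * gaussianDensity κ b y =
      ∫ y, g y * gaussianDensity (κ / r ^ 2) (r • b) y := by
  have h := Measure.integral_comp_smul_of_nonneg volume
    (fun y => g y * gaussianDensity (κ / r ^ 2) (r • b) y) r (hR := hr.le)
  have hr' : (r ^ Module.finrank ℝ E)⁻¹ ≠ 0 := by positivity
  refine mul_left_cancel₀ hr' ?_
  rw [← smul_eq_mul (_⁻¹) (∫ y, g y * _), ← h, ← integral_const_mul]
  simp only [gaussianDensity_smul hr hκ, mul_left_comm]

lemma eq_zero_of_integral_mul_gaussianDensity_eq_zero (hκ : 0 < κ) {g : E → ℝ} (hg : Continuous g)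
    (hg₀ : ∀ y, 0 ≤ g y) (hi : Integrable fun y => g y * gaussianDensity κ b y)
    (h : ∫ y, g y * gaussianDensity κ b y = 0) : g = 0 := by
  have hcont : Continuous fun y => g y * gaussianDensity κ b y :=
    hg.mul (continuous_gaussianDensity κ b)
  rw [integral_eq_zero_iff_of_nonneg
    (fun y => mul_nonneg (hg₀ y) (gaussianDensity_pos hκ b y).le) hi,
    hcont.ae_eq_iff_eq _ continuous_zero] at h
  funext y
  simpa [(gaussianDensity_pos hκ b y).ne'] using congrFun h y

lemma hasDerivAt_integral_mul_gaussianDensity (hκ : 0 < κ) {h : E → ℝ} (hh : Continuous h)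
    {e : E} {τ : ℝ} (hi : Integrable fun y => h y * gaussianDensity κ (τ • e) y)
    (hi₀ : Integrable fun y => h y * gaussianDensity (κ / 4) 0 y) :
    Integrable (fun y => h y * (2 * κ * ⟪y - τ • e, e⟫ * gaussianDensity κ (τ • e) y)) ∧
      HasDerivAt (fun τ : ℝ => ∫ y, h y * gaussianDensity κ (τ • e) y)
        (∫ y, h y * (2 * κ * ⟪y - τ • e, e⟫ * gaussianDensity κ (τ • e) y)) τ := by
  obtain ⟨C, hC⟩ := exists_one_add_norm_sq_mul_gaussianDensity_le E hκ ((|τ| + 1) * ‖e‖)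
  have hcont (σ : ℝ) : Continuous (gaussianDensity κ (σ • e)) := continuous_gaussianDensity _ _
  refine hasDerivAt_integral_of_dominated_loc_of_deriv_le (Metric.ball_mem_nhds τ one_pos)
    (bound := fun y => 2 * κ * ‖e‖ * C * ‖h y * gaussianDensity (κ / 4) 0 y‖)
    (Eventually.of_forall fun σ => (hh.mul (hcont σ)).aestronglyMeasurable) hi
    (by fun_prop) (Eventually.of_forall fun y σ hσ => ?_) (hi₀.norm.const_mul _)
    (Eventually.of_forall fun y σ _ => (hasDerivAt_gaussianDensity_center κ e y σ).const_mul _)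
  have hσe : ‖σ • e‖ ≤ (|τ| + 1) * ‖e‖ := by
    rw [norm_smul, Real.norm_eq_abs]
    gcongr
    have := abs_sub_abs_le_abs_sub σ τ
    rw [Metric.mem_ball, Real.dist_eq] at hσ
    linarith
  have hinner : |⟪y - σ • e, e⟫| ≤ ‖e‖ * (1 + ‖y - σ • e‖ ^ 2) := by
    refine (abs_real_inner_le_norm _ _).trans ?_
    nlinarith [norm_nonneg e, sq_nonneg (‖y - σ • e‖ - 1)]
  have hρ := gaussianDensity_pos hκ (σ • e) y
  have hρ₀ := gaussianDensity_pos (by positivity : 0 < κ / 4) 0 y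
  calc ‖h y * (2 * κ * ⟪y - σ • e, e⟫ * gaussianDensity κ (σ • e) y)‖
      = |h y| * (2 * κ) * (|⟪y - σ • e, e⟫| * gaussianDensity κ (σ • e) y) := by
        simp only [norm_mul, Real.norm_eq_abs, abs_of_pos hρ, abs_of_pos hκ, abs_two]
        ring
    _ ≤ |h y| * (2 * κ) *
          (‖e‖ * (1 + ‖y - σ • e‖ ^ 2) * gaussianDensity κ (σ • e) y) := by gcongr
    _ ≤ |h y| * (2 * κ) * (‖e‖ * (C * gaussianDensity (κ / 4) 0 y)) := by
        rw [mul_assoc ‖e‖]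
        have := mul_le_mul_of_nonneg_left (hC _ hσe y) (norm_nonneg e)
        gcongr
    _ = 2 * κ * ‖e‖ * C * ‖h y * gaussianDensity (κ / 4) 0 y‖ := by
        rw [norm_mul, Real.norm_eq_abs, Real.norm_of_nonneg hρ₀.le]
        ring

end GaussianDensity

lemma exists_forall_abs_comp_le {α : Type*} {w : α → ℝ} {F : ℝ → ℝ} (hw : ∃ M, ∀ y, |w y| ≤ M)
    (hF : Continuous F) : ∃ B, ∀ y, |F (w y)| ≤ B := by
  obtain ⟨M, hM⟩ := hw
  obtain ⟨B, hB⟩ := isCompact_Icc.exists_bound_of_continuousOn (s := Set.Icc (-M) M) hF.continuousOn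
  exact ⟨B, fun y => hB _ (abs_le.1 (hM y))⟩

lemma norm_add_smul_sq_le {E : Type*} [NormedAddCommGroup E] [InnerProductSpace ℝ E] (c : ℝ)
    (b v : E) : ‖(1 / 2 : ℝ) • b + c • v‖ ^ 2 ≤ 1 / 2 * ‖b‖ ^ 2 + 2 * c ^ 2 * ‖v‖ ^ 2 := by
  have h := parallelogram_law_with_norm ℝ ((1 / 2 : ℝ) • b) (c • v)
  rw [norm_smul, norm_smul, mul_pow, mul_pow, Real.norm_eq_abs, Real.norm_eq_abs, sq_abs,
    sq_abs] at h
  nlinarith [sq_nonneg ‖(1 / 2 : ℝ) • b - c • v‖]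

lemma integral_sq_mul_norm_drift_sq_le {E : Type*} [NormedAddCommGroup E] [InnerProductSpace ℝ E]
    [FiniteDimensional ℝ E] [MeasurableSpace E] [BorelSpace E] {w : E → ℝ} (hw : Continuous w)
    {M : ℝ} (hM : ∀ y, |w y| ≤ M) (c : ℝ) {κ : ℝ} (hκ : 0 < κ) (b : E) :
    Integrable (fun y => w y ^ 2 * ‖(1 / 2 : ℝ) • b + c • (y - b)‖ ^ 2 * gaussianDensity κ b y) ∧
      ∫ y, w y ^ 2 * ‖(1 / 2 : ℝ) • b + c • (y - b)‖ ^ 2 * gaussianDensity κ b y ≤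
        M ^ 2 * (1 / 2 * ‖b‖ ^ 2 + c ^ 2 * (Module.finrank ℝ E / κ)) := by
  have hρ := gaussianDensity_pos hκ b
  have hle (y : E) : w y ^ 2 * ‖(1 / 2 : ℝ) • b + c • (y - b)‖ ^ 2 ≤
      M ^ 2 * (1 / 2 * ‖b‖ ^ 2) + M ^ 2 * (2 * c ^ 2) * ‖y - b‖ ^ 2 := by
    have h := norm_add_smul_sq_le c b (y - b)
    calc _ ≤ M ^ 2 * (1 / 2 * ‖b‖ ^ 2 + 2 * c ^ 2 * ‖y - b‖ ^ 2) := by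
          rw [← sq_abs (w y)]
          gcongr
          exact hM y
      _ = _ := by ring
  have hi₁ := (integrable_gaussianDensity hκ b).const_mul (M ^ 2 * (1 / 2 * ‖b‖ ^ 2))
  have hi₂ := (integrable_norm_sub_sq_mul_gaussianDensity hκ b).const_mul (M ^ 2 * (2 * c ^ 2))
  have hmul (y : E) : w y ^ 2 * ‖(1 / 2 : ℝ) • b + c • (y - b)‖ ^ 2 * gaussianDensity κ b y ≤
      M ^ 2 * (1 / 2 * ‖b‖ ^ 2) * gaussianDensity κ b y +
        M ^ 2 * (2 * c ^ 2) * (‖y - b‖ ^ 2 * gaussianDensity κ b y) := by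
    nlinarith [mul_le_mul_of_nonneg_right (hle y) (hρ y).le]
  have hi : Integrable fun y =>
      w y ^ 2 * ‖(1 / 2 : ℝ) • b + c • (y - b)‖ ^ 2 * gaussianDensity κ b y := by
    refine (hi₁.add hi₂).mono' ?_ (Eventually.of_forall fun y => ?_)
    · have := continuous_gaussianDensity κ b
      exact Continuous.aestronglyMeasurable (by fun_prop)
    · rw [Real.norm_of_nonneg (mul_nonneg (by positivity) (hρ y).le)]
      exact hmul y
  refine ⟨hi, (integral_mono hi (hi₁.add hi₂) hmul).trans_eq ?_⟩
  rw [integral_add' hi₁ hi₂, integral_const_mul, integral_const_mul, integral_gaussianDensity hκ,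
    integral_norm_sub_sq_mul_gaussianDensity hκ]
  field_simp

section BoundedProfile

variable {E : Type*} [NormedAddCommGroup E] [InnerProductSpace ℝ E] [FiniteDimensional ℝ E]

/-- A bounded `C²` solution `w` of the self-similar equation `Δw = Φ'(w) + ⟪y, ∇w⟫ / 2`, the
Euler-Lagrange equation of `∫ (‖∇w‖² / 2 + Φ(w)) exp(-‖y‖² / 4)`, for a `C¹` potential `Φ`. -/
structure IsBoundedProfile (Φ : ℝ → ℝ) (w : E → ℝ) : Prop where
  contDiff_potential : ContDiff ℝ 1 Φ
  contDiff : ContDiff ℝ 2 w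
  bounded : ∃ M, ∀ y, |w y| ≤ M
  divergence_gradient : ∀ y, divergence (∇ w) y = deriv Φ (w y) + 1 / 2 * ⟪y, ∇ w y⟫

/-- The integrand of the Gaussian-weighted energy of `w` with potential `Φ`. -/
noncomputable def energyDensity (Φ : ℝ → ℝ) (w : E → ℝ) (y : E) : ℝ :=
  1 / 2 * ‖∇ w y‖ ^ 2 + Φ (w y)

/-- The energy of `w` with potential `Φ` against the Gaussian density `gaussianDensity κ b`. The
Giga–Kohn energies of a self-similar solution are multiples of such energies of its profile. -/
noncomputable def gaussianEnergy [MeasurableSpace E] [BorelSpace E] (Φ : ℝ → ℝ) (w : E → ℝ) (κ : ℝ)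
    (b : E) : ℝ :=
  ∫ y, energyDensity Φ w y * gaussianDensity κ b y

/-- The stress field of the energy in the direction `e`: the Noether current of the energy density
for translations along `e`. -/
noncomputable def stressField (Φ : ℝ → ℝ) (w : E → ℝ) (e y : E) : E :=
  energyDensity Φ w y • e - ⟪e, ∇ w y⟫ • ∇ w y

variable {Φ F : ℝ → ℝ} {w : E → ℝ} {κ τ : ℝ} {b e y : E}

namespace IsBoundedProfile

variable (hw : IsBoundedProfile Φ w)
include hw

lemma continuous_mul_deriv_potential : Continuous fun s => s * deriv Φ s :=
  continuous_id.mul (hw.contDiff_potential.continuous_deriv le_rfl)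

lemma continuous_gradient : Continuous (∇ w) :=
  (contDiff_gradient hw.contDiff).continuous

lemma divergence_gaussianDensity_smul_gradient (κ : ℝ) (b y : E) :
    divergence (fun z => gaussianDensity κ b z • ∇ w z) y =
      gaussianDensity κ b y *
        (deriv Φ (w y) + ⟪(1 / 2 : ℝ) • b + (1 / 2 - 2 * κ) • (y - b), ∇ w y⟫) := by
  rw [divergence_gaussianDensity_smul
    ((contDiff_gradient hw.contDiff).differentiable one_ne_zero y), hw.divergence_gradient]
  simp only [inner_add_left, inner_sub_left, real_inner_smul_left]
  ring

lemma contDiff_energyDensity : ContDiff ℝ 1 (energyDensity Φ w) :=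
  (contDiff_const.mul ((contDiff_gradient hw.contDiff).norm_sq ℝ)).add
    (hw.contDiff_potential.comp (hw.contDiff.of_le one_le_two))

lemma fderiv_energyDensity_apply (y v : E) :
    fderiv ℝ (energyDensity Φ w) y v =
      ⟪fderiv ℝ (∇ w) y v, ∇ w y⟫ + deriv Φ (w y) * ⟪∇ w y, v⟫ := by
  have hgrad := ((contDiff_gradient hw.contDiff).differentiable one_ne_zero y).hasFDerivAt
  have hpot := (hw.contDiff_potential.differentiable one_ne_zero (w y)).hasDerivAt.comp_hasFDerivAt
    y (hw.contDiff.differentiable two_ne_zero y).hasFDerivAt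
  have h : HasFDerivAt (energyDensity Φ w) _ y := (hgrad.norm_sq.const_mul (1 / 2)).add hpot
  rw [h.fderiv, inner_gradient_left]
  simp

lemma contDiff_stressField (e : E) : ContDiff ℝ 1 (stressField Φ w e) :=
  (hw.contDiff_energyDensity.smul contDiff_const).sub
    ((contDiff_const.inner ℝ (contDiff_gradient hw.contDiff)).smul (contDiff_gradient hw.contDiff))

lemma divergence_stressField (e y : E) :
    divergence (stressField Φ w e) y = -(1 / 2 * ⟪e, ∇ w y⟫ * ⟪y, ∇ w y⟫) := by
  have hgrad := (contDiff_gradient hw.contDiff).differentiable one_ne_zero y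
  have henergy := hw.contDiff_energyDensity.differentiable one_ne_zero y
  have hinner : DifferentiableAt ℝ (fun z => ⟪e, ∇ w z⟫) y :=
    (differentiableAt_const e).inner ℝ hgrad
  change divergence (fun z => energyDensity Φ w z • e - ⟪e, ∇ w z⟫ • ∇ w z) y = _
  rw [divergence_sub (henergy.fun_smul (differentiableAt_const e)) (hinner.fun_smul hgrad),
    divergence_smul henergy (differentiableAt_const e), divergence_const,
    divergence_smul hinner hgrad, hw.fderiv_energyDensity_apply,
    fderiv_inner_apply ℝ (differentiableAt_const e) hgrad, hw.divergence_gradient,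
    inner_fderiv_gradient_comm hw.contDiff, fderiv_fun_const]
  simp [real_inner_comm]
  ring

lemma divergence_gaussianDensity_smul_stressField (e : E) (τ : ℝ) (y : E) :
    divergence (fun z => gaussianDensity (1 / 4) (τ • e) z • stressField Φ w e z) y =
      -(energyDensity Φ w y *
          (2 * (1 / 4) * ⟪y - τ • e, e⟫ * gaussianDensity (1 / 4) (τ • e) y) +
        τ / 2 * (⟪e, ∇ w y⟫ ^ 2 * gaussianDensity (1 / 4) (τ • e) y)) := by
  rw [divergence_gaussianDensity_smul ((hw.contDiff_stressField e).differentiable one_ne_zero y),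
    hw.divergence_stressField, stressField]
  simp only [inner_sub_left, inner_sub_right, inner_smul_left, inner_smul_right, conj_trivial]
  ring

lemma contDiff_smul_gaussianDensity_smul_gradient (κ : ℝ) (b : E) :
    ContDiff ℝ 1 fun z => w z • gaussianDensity κ b z • ∇ w z :=
  (hw.contDiff.of_le one_le_two).smul
    ((contDiff_gaussianDensity κ b).smul (contDiff_gradient hw.contDiff))

lemma divergence_smul_gaussianDensity_smul_gradient (y : E) :
    divergence (fun z => w z • gaussianDensity (1 / 4) 0 z • ∇ w z) y =
      w y * deriv Φ (w y) * gaussianDensity (1 / 4) 0 y +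
        ‖∇ w y‖ ^ 2 * gaussianDensity (1 / 4) 0 y := by
  have hdrift : (1 / 2 - 2 * (1 / 4) : ℝ) = 0 := by norm_num
  rw [divergence_smul_smul_gradient (hw.contDiff.of_le one_le_two) (contDiff_gaussianDensity _ _)
      hw.contDiff, hw.divergence_gaussianDensity_smul_gradient, real_inner_self_eq_norm_sq, hdrift,
    smul_zero, zero_smul, add_zero, inner_zero_left]
  ring

variable [MeasurableSpace E] [BorelSpace E]

lemma integrable_comp_mul_gaussianDensity (hF : Continuous F) (hκ : 0 < κ) (b : E) :
    Integrable fun y => F (w y) * gaussianDensity κ b y :=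
  let ⟨_, hB⟩ := exists_forall_abs_comp_le hw.bounded hF
  integrable_bounded_mul_gaussianDensity hκ (hF.comp hw.contDiff.continuous) hB

theorem exists_integral_norm_gradient_sq_le :
    ∃ K, 0 ≤ K ∧ ∀ κ > 0, ∀ b : E, Integrable (fun y => ‖∇ w y‖ ^ 2 * gaussianDensity κ b y) ∧
      ∫ y, ‖∇ w y‖ ^ 2 * gaussianDensity κ b y ≤ K * (1 + ‖b‖ ^ 2 + κ + κ⁻¹) := by
  obtain ⟨M, hM⟩ := hw.bounded
  have hsource := hw.continuous_mul_deriv_potential.abs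
  obtain ⟨B, hB⟩ := exists_forall_abs_comp_le hw.bounded hsource
  set d : ℝ := (Module.finrank ℝ E : ℝ)
  have hd : 0 ≤ d := Nat.cast_nonneg _
  have hB₀ : 0 ≤ B := (abs_nonneg _).trans (hB 0)
  refine ⟨2 * B + M ^ 2 + 8 * M ^ 2 * d, by positivity, fun κ hκ b => ?_⟩
  have hif := hw.integrable_comp_mul_gaussianDensity hsource hκ b
  obtain ⟨hiW, hW⟩ :=
    integral_sq_mul_norm_drift_sq_le hw.contDiff.continuous hM (1 / 2 - 2 * κ) hκ b
  obtain ⟨hi, hle⟩ := caccioppoli (contDiff_gaussianDensity (k := 1) κ b)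
    (fun y => (gaussianDensity_pos hκ b y).le) hw.contDiff
    (hw.divergence_gaussianDensity_smul_gradient κ b) hif hiW
    (hw.integrable_comp_mul_gaussianDensity (continuous_pow 2) hκ b)
  refine ⟨hi, hle.trans ?_⟩
  have hf := integral_mul_gaussianDensity_le hκ hif fun y => (le_abs_self _).trans (hB y)
  have hcoeff : (1 / 2 - 2 * κ) ^ 2 * (d / κ) ≤ d * (κ⁻¹ / 4 + 4 * κ) := by
    rw [← sub_nonneg]
    have : d * (κ⁻¹ / 4 + 4 * κ) - (1 / 2 - 2 * κ) ^ 2 * (d / κ) = 2 * d := by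
      field_simp
      ring
    linarith
  have hκ' : 0 < κ⁻¹ := inv_pos.2 hκ
  have h₁ : M ^ 2 * ((1 / 2 - 2 * κ) ^ 2 * (d / κ)) ≤ M ^ 2 * (d * (κ⁻¹ / 4 + 4 * κ)) := by gcongr
  have h₂ : 0 ≤ M ^ 2 * d := by positivity
  nlinarith [mul_nonneg h₂ hκ.le, mul_nonneg h₂ hκ'.le, mul_nonneg hB₀ (sq_nonneg ‖b‖),
    mul_nonneg hB₀ hκ.le, mul_nonneg hB₀ hκ'.le, mul_nonneg h₂ (sq_nonneg ‖b‖),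
    mul_nonneg (sq_nonneg M) hκ.le, mul_nonneg (sq_nonneg M) hκ'.le]

lemma integrable_norm_gradient_sq (hκ : 0 < κ) (b : E) :
    Integrable fun y => ‖∇ w y‖ ^ 2 * gaussianDensity κ b y :=
  let ⟨_, _, h⟩ := hw.exists_integral_norm_gradient_sq_le
  (h κ hκ b).1

lemma integrable_energyDensity (hF : Continuous F) (hκ : 0 < κ) (b : E) :
    Integrable fun y => energyDensity F w y * gaussianDensity κ b y := by
  simp only [energyDensity, add_mul, mul_assoc]
  exact ((hw.integrable_norm_gradient_sq hκ b).const_mul (1 / 2)).add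
    (hw.integrable_comp_mul_gaussianDensity hF hκ b)

lemma gaussianEnergy_eq (hF : Continuous F) (hκ : 0 < κ) (b : E) :
    gaussianEnergy F w κ b = 1 / 2 * (∫ y, ‖∇ w y‖ ^ 2 * gaussianDensity κ b y) +
      ∫ y, F (w y) * gaussianDensity κ b y := by
  simp only [gaussianEnergy, energyDensity, add_mul, mul_assoc]
  rw [integral_add ((hw.integrable_norm_gradient_sq hκ b).const_mul _)
    (hw.integrable_comp_mul_gaussianDensity hF hκ b), integral_const_mul]

lemma integrable_inner_gradient_sq (hκ : 0 < κ) (e b : E) :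
    Integrable fun y => ⟪e, ∇ w y⟫ ^ 2 * gaussianDensity κ b y := by
  refine ((hw.integrable_norm_gradient_sq hκ b).const_mul (‖e‖ ^ 2)).mono'
    (((continuous_const.inner hw.continuous_gradient).pow 2).mul
      (continuous_gaussianDensity κ b)).aestronglyMeasurable (Eventually.of_forall fun y => ?_)
  have hρ := gaussianDensity_pos hκ b y
  rw [Real.norm_of_nonneg (by positivity), ← mul_assoc, ← mul_pow, ← sq_abs]
  gcongr
  exact abs_real_inner_le_norm e (∇ w y)

lemma integrable_gaussianDensity_smul_stressField (hκ : 0 < κ) (e b : E) :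
    Integrable fun y => gaussianDensity κ b y • stressField Φ w e y := by
  refine (((hw.integrable_energyDensity hw.contDiff_potential.continuous hκ b).norm.const_mul
    ‖e‖).add ((hw.integrable_norm_gradient_sq hκ b).const_mul ‖e‖)).mono'
    ((continuous_gaussianDensity κ b).smul
      (hw.contDiff_stressField e).continuous).aestronglyMeasurable
    (Eventually.of_forall fun y => ?_)
  have hρ := gaussianDensity_pos hκ b y
  have hX : ‖stressField Φ w e y‖ ≤ |energyDensity Φ w y| * ‖e‖ + ‖e‖ * ‖∇ w y‖ * ‖∇ w y‖ := by
    refine (norm_sub_le _ _).trans ?_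
    rw [norm_smul, norm_smul, Real.norm_eq_abs, Real.norm_eq_abs]
    gcongr
    exact abs_real_inner_le_norm e (∇ w y)
  calc ‖gaussianDensity κ b y • stressField Φ w e y‖
      = gaussianDensity κ b y * ‖stressField Φ w e y‖ := by
        rw [norm_smul, Real.norm_of_nonneg hρ.le]
    _ ≤ gaussianDensity κ b y *
          (|energyDensity Φ w y| * ‖e‖ + ‖e‖ * ‖∇ w y‖ * ‖∇ w y‖) := by gcongr
    _ = _ := by
        rw [Pi.add_apply, norm_mul, Real.norm_of_nonneg hρ.le, Real.norm_eq_abs]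
        ring

theorem hasDerivAt_gaussianEnergy (e : E) (τ : ℝ) :
    HasDerivAt (fun τ : ℝ => gaussianEnergy Φ w (1 / 4) (τ • e))
      (-(τ / 2 * ∫ y, ⟪e, ∇ w y⟫ ^ 2 * gaussianDensity (1 / 4) (τ • e) y)) τ := by
  have hκ : (0 : ℝ) < 1 / 4 := by norm_num
  have hΦ := hw.contDiff_potential.continuous
  obtain ⟨hi, hderiv⟩ := hasDerivAt_integral_mul_gaussianDensity hκ
    hw.contDiff_energyDensity.continuous (hw.integrable_energyDensity hΦ hκ (τ • e))
    (hw.integrable_energyDensity hΦ (by norm_num) 0)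
  have hi' := (hw.integrable_inner_gradient_sq hκ e (τ • e)).const_mul (τ / 2)
  have hdiv := funext (hw.divergence_gaussianDensity_smul_stressField e τ)
  have hC₁ : ContDiff ℝ 1 fun y => gaussianDensity (1 / 4) (τ • e) y • stressField Φ w e y :=
    (contDiff_gaussianDensity _ _).smul (hw.contDiff_stressField e)
  have hzero := integral_divergence_eq_zero hC₁
    (hw.integrable_gaussianDensity_smul_stressField hκ e (τ • e)) (hdiv ▸ (hi.add hi').neg)
  simp only [hdiv] at hzero
  rw [integral_neg, integral_add hi hi', integral_const_mul] at hzero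
  exact hderiv.congr_deriv (by linarith)

lemma antitoneOn_gaussianEnergy (e : E) :
    AntitoneOn (fun τ : ℝ => gaussianEnergy Φ w (1 / 4) (τ • e)) (Set.Ici 0) := by
  refine antitoneOn_of_hasDerivWithinAt_nonpos (convex_Ici 0)
    (fun τ _ => (hw.hasDerivAt_gaussianEnergy e τ).continuousAt.continuousWithinAt)
    (fun τ _ => (hw.hasDerivAt_gaussianEnergy e τ).hasDerivWithinAt) fun τ hτ => ?_
  rw [interior_Ici, Set.mem_Ioi] at hτ
  have : 0 ≤ ∫ y, ⟪e, ∇ w y⟫ ^ 2 * gaussianDensity (1 / 4) (τ • e) y :=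
    integral_nonneg fun y => mul_nonneg (sq_nonneg _) (gaussianDensity_pos (by norm_num) _ _).le
  exact neg_nonpos.2 (by positivity)

theorem inner_gradient_eq_zero_of_tendsto {L : ℝ}
    (hL : Tendsto (fun τ : ℝ => gaussianEnergy Φ w (1 / 4) (τ • e)) atTop (𝓝 L))
    (h₀ : gaussianEnergy Φ w (1 / 4) 0 ≤ L) (y : E) : ⟪e, ∇ w y⟫ = 0 := by
  have hanti := hw.antitoneOn_gaussianEnergy e
  have hconst : ∀ τ : ℝ, 0 ≤ τ → gaussianEnergy Φ w (1 / 4) (τ • e) = L := fun τ hτ => by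
    refine le_antisymm ?_ (le_of_tendsto hL ?_)
    · have h := hanti Set.self_mem_Ici hτ hτ
      simp only [zero_smul] at h
      exact h.trans h₀
    · filter_upwards [eventually_ge_atTop τ] with σ hσ
      exact hanti hτ (hτ.trans hσ) hσ
  have hderiv : HasDerivAt (fun τ : ℝ => gaussianEnergy Φ w (1 / 4) (τ • e)) 0 1 :=
    (hasDerivAt_const (1 : ℝ) L).congr_of_eventuallyEq <| by
      filter_upwards [lt_mem_nhds one_pos] with τ hτ using hconst τ hτ.le
  have hzero : ∫ y, ⟪e, ∇ w y⟫ ^ 2 * gaussianDensity (1 / 4) ((1 : ℝ) • e) y = 0 := by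
    linarith [(hw.hasDerivAt_gaussianEnergy e 1).unique hderiv]
  have h := eq_zero_of_integral_mul_gaussianDensity_eq_zero (by norm_num)
    ((continuous_const.inner hw.continuous_gradient).pow 2) (fun _ => sq_nonneg _)
    (hw.integrable_inner_gradient_sq (by norm_num) e _) hzero
  exact pow_eq_zero_iff two_ne_zero |>.1 (congrFun h y)

lemma integrable_smul_gaussianDensity_smul_gradient (hκ : 0 < κ) (b : E) :
    Integrable fun z => w z • gaussianDensity κ b z • ∇ w z := by
  obtain ⟨M, hM⟩ := hw.bounded
  refine (((integrable_gaussianDensity hκ b).add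
    (hw.integrable_norm_gradient_sq hκ b)).const_mul M).mono'
    (hw.contDiff_smul_gaussianDensity_smul_gradient κ b).continuous.aestronglyMeasurable
    (Eventually.of_forall fun y => ?_)
  have hρ := gaussianDensity_pos hκ b y
  rw [norm_smul, norm_smul, Real.norm_eq_abs, Real.norm_of_nonneg hρ.le]
  calc |w y| * (gaussianDensity κ b y * ‖∇ w y‖)
      ≤ M * (gaussianDensity κ b y * (1 + ‖∇ w y‖ ^ 2)) := by
        gcongr
        · exact (abs_nonneg _).trans (hM y)
        · exact hM y
        · nlinarith [sq_nonneg (‖∇ w y‖ - 1), norm_nonneg (∇ w y)]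
    _ = _ := by
        rw [Pi.add_apply]
        ring

lemma integral_norm_gradient_sq_eq :
    ∫ y, ‖∇ w y‖ ^ 2 * gaussianDensity (1 / 4) 0 y =
      -∫ y, w y * deriv Φ (w y) * gaussianDensity (1 / 4) 0 y := by
  have hκ : (0 : ℝ) < 1 / 4 := by norm_num
  have hi := hw.integrable_norm_gradient_sq hκ 0
  have hi' := hw.integrable_comp_mul_gaussianDensity hw.continuous_mul_deriv_potential hκ 0
  have hdiv := funext hw.divergence_smul_gaussianDensity_smul_gradient
  have hzero := integral_divergence_eq_zero
    (hw.contDiff_smul_gaussianDensity_smul_gradient (1 / 4) 0)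
    (hw.integrable_smul_gaussianDensity_smul_gradient hκ 0) (hdiv ▸ hi'.add hi)
  simp only [hdiv] at hzero
  rw [integral_add hi' hi] at hzero
  linarith

theorem eq_zero_of_gaussianEnergy_nonpos (hΦ : ∀ s, 0 ≤ Φ s - 1 / 2 * (s * deriv Φ s))
    (hΦ₀ : ∀ s, Φ s - 1 / 2 * (s * deriv Φ s) = 0 → s = 0)
    (h : gaussianEnergy Φ w (1 / 4) 0 ≤ 0) : w = 0 := by
  have hκ : (0 : ℝ) < 1 / 4 := by norm_num
  have hsource := hw.continuous_mul_deriv_potential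
  have hpot := hw.contDiff_potential.continuous
  have hgap : Continuous fun s => Φ s - 1 / 2 * (s * deriv Φ s) :=
    hpot.sub (continuous_const.mul hsource)
  have henergy : ∫ y, (Φ (w y) - 1 / 2 * (w y * deriv Φ (w y))) * gaussianDensity (1 / 4) 0 y =
      gaussianEnergy Φ w (1 / 4) 0 := by
    rw [hw.gaussianEnergy_eq hpot hκ, hw.integral_norm_gradient_sq_eq]
    simp only [sub_mul, mul_assoc (1 / 2 : ℝ)]
    rw [integral_sub (hw.integrable_comp_mul_gaussianDensity hpot hκ 0)
      ((hw.integrable_comp_mul_gaussianDensity hsource hκ 0).const_mul _), integral_const_mul]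
    ring
  have hnonneg : 0 ≤ gaussianEnergy Φ w (1 / 4) 0 := henergy ▸ integral_nonneg fun y =>
    mul_nonneg (hΦ _) (gaussianDensity_pos hκ 0 y).le
  have hzero := eq_zero_of_integral_mul_gaussianDensity_eq_zero hκ
    (hgap.comp hw.contDiff.continuous) (fun y => hΦ (w y))
    (hw.integrable_comp_mul_gaussianDensity hgap hκ 0)
    (henergy.trans (le_antisymm h hnonneg))
  exact funext fun y => hΦ₀ _ (congrFun hzero y)

end IsBoundedProfile

end BoundedProfile

section Translation

variable {E : Type*} [NormedAddCommGroup E] [InnerProductSpace ℝ E] [CompleteSpace E]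

lemma apply_smul_add_eq_of_inner_gradient_eq_zero {w : E → ℝ} (hw : Differentiable ℝ w) {e : E}
    (he : ∀ y, ⟪e, ∇ w y⟫ = 0) (c : ℝ) (y : E) : w (c • e + y) = w y := by
  have hderiv (c : ℝ) : HasDerivAt (fun c : ℝ => w (c • e + y)) 0 c := by
    have hline : HasDerivAt (fun c : ℝ => c • e + y) e c := by
      simpa using ((hasDerivAt_id c).smul_const e).add_const y
    have h := (hw (c • e + y)).hasFDerivAt.comp_hasDerivAt c hline
    rwa [← inner_gradient_left, real_inner_comm, he] at h
  have h := is_const_of_deriv_eq_zero (fun c => (hderiv c).differentiableAt)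
    (fun c => (hderiv c).deriv) c 0
  simpa using h

lemma norm_fderiv_const_mul_comp_smul {w : E → ℝ} (hw : Differentiable ℝ w) (c r : ℝ) (y : E) :
    ‖fderiv ℝ (fun z => c * w (r • z)) y‖ ^ 2 = (c * r) ^ 2 * ‖∇ w (r • y)‖ ^ 2 := by
  have hfderiv : fderiv ℝ (fun z => c * w (r • z)) y = c • r • fderiv ℝ w (r • y) := by
    rw [fderiv_const_mul (by fun_prop), fderiv_comp_smul]
  rw [hfderiv, norm_gradient, norm_smul, norm_smul, ← mul_assoc, mul_pow, ← norm_mul,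
    Real.norm_eq_abs, sq_abs]

end Translation

section PowerPotential

/-- The potential of the Giga–Kohn energy. For `c = 1` its derivative `s / (p - 1) - |s|^{p - 1} s`
is the reaction term of the self-similar equation; other values of `c` arise when the energy at a
point other than the centre of self-similarity is written in self-similar variables. -/
noncomputable def powerPotential (p c s : ℝ) : ℝ :=
  c / (2 * (p - 1)) * s ^ 2 - 1 / (p + 1) * |s| ^ (p + 1)

variable {p : ℝ} (hp : 1 < p) (c s : ℝ)
include hp

lemma hasDerivAt_powerPotential :
    HasDerivAt (powerPotential p c) (c / (p - 1) * s - |s| ^ (p - 1) * s) s := by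
  have hp₁ : p - 1 ≠ 0 := by linarith
  have hp₂ : p + 1 ≠ 0 := by linarith
  have h := ((hasDerivAt_pow 2 s).const_mul (c / (2 * (p - 1)))).sub
    ((hasDerivAt_abs_rpow s (p := p + 1) (by linarith)).const_mul (1 / (p + 1)))
  refine h.congr_deriv ?_
  rw [show p + 1 - 2 = p - 1 by ring, Nat.add_one_sub_one, pow_one]
  field_simp
  norm_num
  ring

lemma contDiff_powerPotential : ContDiff ℝ 1 (powerPotential p c) := by
  refine contDiff_one_iff_deriv.2
    ⟨fun s => (hasDerivAt_powerPotential hp c s).differentiableAt, ?_⟩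
  rw [funext fun s => (hasDerivAt_powerPotential hp c s).deriv]
  exact (continuous_const.mul continuous_id).sub
    ((continuous_abs.rpow_const fun _ => Or.inr (by linarith)).mul continuous_id)

lemma powerPotential_one_sub :
    powerPotential p 1 s - 1 / 2 * (s * deriv (powerPotential p 1) s) =
      (1 / 2 - 1 / (p + 1)) * |s| ^ (p + 1) := by
  have hp₁ : p - 1 ≠ 0 := by linarith
  have hpow : |s| ^ (p - 1) * s ^ 2 = |s| ^ (p + 1) := by
    rw [← sq_abs, ← Real.rpow_natCast, ← Real.rpow_add' (abs_nonneg s) (by norm_num; linarith)]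
    norm_num
    ring_nf
  rw [(hasDerivAt_powerPotential hp 1 s).deriv, powerPotential, ← hpow]
  field_simp
  ring

end PowerPotential

section Scaling

lemma rpow_neg_one_div_sq {m : ℝ} (hm : 0 ≤ m) (a : ℝ) :
    (m ^ (-(1 / a))) ^ 2 = m ^ (-(2 / a)) := by
  rw [← Real.rpow_natCast, ← Real.rpow_mul hm]
  congr 1
  push_cast
  ring

lemma rpow_neg_one_div_mul_rpow_neg_half_sq {p m : ℝ} (hp : p ≠ 1) (hm : 0 < m) :
    (m ^ (-(1 / (p - 1))) * m ^ (-(1 / 2) : ℝ)) ^ 2 = m ^ (-((p + 1) / (p - 1))) := by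
  rw [← Real.rpow_add hm, ← Real.rpow_natCast, ← Real.rpow_mul hm.le]
  congr 1
  grind

lemma abs_rpow_neg_one_div_rpow {m : ℝ} (hm : 0 ≤ m) (a b : ℝ) :
    |m ^ (-(1 / a))| ^ b = m ^ (-(b / a)) := by
  rw [abs_of_nonneg (by positivity), ← Real.rpow_mul hm]
  congr 1
  ring

lemma div_rpow_neg {s t : ℝ} (hs : s < 0) (ht : t ≤ 0) (a : ℝ) :
    (t / s) ^ (-a) = (-s) ^ a * (-t) ^ (-a) := by
  have hs' := (neg_pos.2 hs).le
  rw [← neg_div_neg_eq, Real.div_rpow (neg_nonneg.2 ht) hs', Real.rpow_neg hs' a, div_inv_eq_mul,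
    mul_comm]

lemma rpow_neg_add_one_div_mul_self {p r : ℝ} (hp : p ≠ 1) (hr : r ≠ 0) :
    r ^ (-((p + 1) / (p - 1))) * r = r ^ (-(2 / (p - 1))) := by
  rw [← Real.rpow_add_one hr]
  congr 1
  grind

lemma norm_rpow_neg_half_smul_sq {E : Type*} [NormedAddCommGroup E] [NormedSpace ℝ E] {m : ℝ}
    (hm : 0 ≤ m) (x : E) : ‖m ^ (-(1 / 2) : ℝ) • x‖ ^ 2 = m⁻¹ * ‖x‖ ^ 2 := by
  rw [norm_smul, mul_pow, Real.norm_eq_abs, sq_abs, rpow_neg_one_div_sq hm, div_self two_ne_zero,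
    Real.rpow_neg_one]

lemma tendsto_add_div_self_nhdsLT_zero {t : ℝ} (ht : t < 0) :
    Tendsto (fun s => (t + s) / s) (𝓝[<] 0) atTop := by
  have h : Tendsto (fun s => 1 + t * s⁻¹) (𝓝[<] 0) atTop :=
    tendsto_atTop_add_const_left _ _ (tendsto_inv_nhdsLT_zero.const_mul_atBot_of_neg ht)
  refine h.congr' ?_
  filter_upwards [self_mem_nhdsWithin] with s (hs : s < 0)
  rw [add_div, div_self hs.ne, div_eq_mul_inv, add_comm]

end Scaling

section GigaKohn

variable {n : ℕ} {p : ℝ} {w : EuclideanSpace ℝ (Fin n) → ℝ}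

lemma lap_eq_divergence_gradient (hw : ContDiff ℝ 2 w) (y : EuclideanSpace ℝ (Fin n)) :
    lap w y = divergence (∇ w) y := by
  rw [divergence, LinearMap.trace_eq_sum_inner _ (EuclideanSpace.basisFun (Fin n) ℝ), lap]
  refine Finset.sum_congr rfl fun i _ => ?_
  rw [EuclideanSpace.basisFun_apply, real_inner_comm, ContinuousLinearMap.coe_coe,
    inner_fderiv_gradient hw]

lemma bkernel_sub {s : ℝ} (hs : s < 0) (b y : EuclideanSpace ℝ (Fin n)) :
    bkernel n (y - b) s = gaussianDensity (-4 * s)⁻¹ b y := by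
  have hbase : (-4 * s)⁻¹ / π = (-4 * π * s)⁻¹ := by
    field_simp
  have hnonneg : 0 ≤ -4 * π * s := by nlinarith [pi_pos]
  rw [bkernel, gaussianDensity, finrank_euclideanSpace_fin, hbase, Real.inv_rpow hnonneg,
    ← Real.rpow_neg hnonneg, neg_div]
  congr 2
  field_simp

lemma integral_mul_bkernel_eq {s t : ℝ} (hs : s < 0) (ht : t < 0)
    {f g : EuclideanSpace ℝ (Fin n) → ℝ} {a : ℝ}
    (hf : ∀ y, f y = a * g ((-t) ^ (-(1 / 2) : ℝ) • y)) (x : EuclideanSpace ℝ (Fin n)) :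
    ∫ y, f y * bkernel n (y - x) s =
      a * ∫ y, g y * gaussianDensity (t / s / 4) ((-t) ^ (-(1 / 2) : ℝ) • x) y := by
  have ht' : 0 < -t := neg_pos.2 ht
  have hκ : (-4 * s)⁻¹ / ((-t) ^ (-(1 / 2) : ℝ)) ^ 2 = t / s / 4 := by
    rw [rpow_neg_one_div_sq ht'.le, div_self two_ne_zero, Real.rpow_neg_one]
    field_simp
  simp only [bkernel_sub hs, hf, mul_assoc]
  rw [integral_const_mul, integral_comp_smul_mul_gaussianDensity (by positivity)
    (inv_nonneg.2 (by linarith)), hκ]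

lemma IsBoundedProfile.gaussianEnergy_powerPotential {Φ : ℝ → ℝ} (hw : IsBoundedProfile Φ w)
    (hp : 1 < p) (c : ℝ) {κ : ℝ} (hκ : 0 < κ) (b : EuclideanSpace ℝ (Fin n)) :
    gaussianEnergy (powerPotential p c) w κ b =
      1 / 2 * (∫ y, ‖∇ w y‖ ^ 2 * gaussianDensity κ b y) +
        (c / (2 * (p - 1)) * (∫ y, w y ^ 2 * gaussianDensity κ b y) -
          1 / (p + 1) * ∫ y, |w y| ^ (p + 1) * gaussianDensity κ b y) := by
  have hpow : Continuous fun s : ℝ => |s| ^ (p + 1) :=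
    continuous_abs.rpow_const fun _ => Or.inr (by linarith)
  rw [hw.gaussianEnergy_eq (contDiff_powerPotential hp c).continuous hκ]
  simp only [powerPotential, sub_mul, mul_assoc]
  rw [integral_sub ((hw.integrable_comp_mul_gaussianDensity (continuous_pow 2) hκ b).const_mul _)
    ((hw.integrable_comp_mul_gaussianDensity hpow hκ b).const_mul _), integral_const_mul,
    integral_const_mul]

theorem IsBoundedProfile.GKenergy_eq {Φ : ℝ → ℝ} (hw : IsBoundedProfile Φ w) (hp : 1 < p)
    {u : EuclideanSpace ℝ (Fin n) → ℝ → ℝ} {s t t₀ : ℝ} (hs : s < 0) (ht : t < 0)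
    (hst : t₀ + s = t)
    (hu : ∀ x, u x t = (-t) ^ (-(1 / (p - 1))) * w ((-t) ^ (-(1 / 2) : ℝ) • x))
    (x₀ : EuclideanSpace ℝ (Fin n)) :
    GKenergy n p u s x₀ t₀ = (t / s) ^ (-((p + 1) / (p - 1))) *
      gaussianEnergy (powerPotential p (t / s)) w (t / s / 4) ((-t) ^ (-(1 / 2) : ℝ) • x₀) := by
  have hts : 0 < t / s := div_pos_of_neg_of_neg ht hs
  have hm : 0 < -t := neg_pos.2 ht
  have hgrad := integral_mul_bkernel_eq hs ht (f := fun y => ‖fderiv ℝ (fun z => u z t) y‖ ^ 2)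
    (g := fun y => ‖∇ w y‖ ^ 2) (fun y => by
      simp only [hu]
      rw [norm_fderiv_const_mul_comp_smul (hw.contDiff.differentiable two_ne_zero),
        rpow_neg_one_div_mul_rpow_neg_half_sq hp.ne' hm]) x₀
  have hpow := integral_mul_bkernel_eq hs ht (f := fun y => |u y t| ^ (p + 1))
    (g := fun y => |w y| ^ (p + 1)) (fun y => by
      rw [hu, abs_mul, Real.mul_rpow (abs_nonneg _) (abs_nonneg _),
        abs_rpow_neg_one_div_rpow hm.le]) x₀
  have hsq := integral_mul_bkernel_eq hs ht (f := fun y => u y t ^ 2)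
    (g := fun y => w y ^ 2) (fun y => by rw [hu, mul_pow, rpow_neg_one_div_sq hm.le]) x₀
  have hα := div_rpow_neg hs ht.le ((p + 1) / (p - 1))
  have hβ := (rpow_neg_add_one_div_mul_self hp.ne' hts.ne').trans (div_rpow_neg hs ht.le _)
  rw [GKenergy, hst, hgrad, hpow, hsq, hw.gaussianEnergy_powerPotential hp _ (by positivity)]
  set ρ := gaussianDensity (t / s / 4) ((-t) ^ (-(1 / 2) : ℝ) • x₀)
  linear_combination
    (1 / (p + 1) * (∫ y, |w y| ^ (p + 1) * ρ y) - 1 / 2 * ∫ y, ‖∇ w y‖ ^ 2 * ρ y) * hα -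
      1 / (2 * (p - 1)) * (∫ y, w y ^ 2 * ρ y) * hβ

end GigaKohn

section Density

variable {n : ℕ} {p θ : ℝ} {w : EuclideanSpace ℝ (Fin n) → ℝ}
  {u : EuclideanSpace ℝ (Fin n) → ℝ → ℝ} {x₀ : EuclideanSpace ℝ (Fin n)}

lemma isBoundedProfile_powerPotential (hp : 1 < p) (hsmooth : ContDiff ℝ 2 w)
    (hbd : ∃ M : ℝ, ∀ y, |w y| ≤ M)
    (heq : ∀ y, lap w y - 1 / 2 * fderiv ℝ w y y - w y / (p - 1) + |w y| ^ (p - 1) * w y = 0) :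
    IsBoundedProfile (powerPotential p 1) w where
  contDiff_potential := contDiff_powerPotential hp 1
  contDiff := hsmooth
  bounded := hbd
  divergence_gradient y := by
    rw [(hasDerivAt_powerPotential hp 1 _).deriv, ← lap_eq_divergence_gradient hsmooth,
      real_inner_comm, inner_gradient_left]
    linear_combination heq y

lemma eq_zero_of_gaussianEnergy_powerPotential_nonpos (hp : 1 < p)
    (hw : IsBoundedProfile (powerPotential p 1) w)
    (h : gaussianEnergy (powerPotential p 1) w (1 / 4) 0 ≤ 0) : w = 0 := by
  have hcoeff : 0 < 1 / 2 - 1 / (p + 1) :=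
    sub_pos.2 (one_div_lt_one_div_of_lt two_pos (by linarith))
  refine hw.eq_zero_of_gaussianEnergy_nonpos (fun s => ?_) (fun s hs => ?_) h
  · rw [powerPotential_one_sub hp]
    positivity
  · rw [powerPotential_one_sub hp, mul_eq_zero_iff_left hcoeff.ne'] at hs
    exact abs_eq_zero.1 ((Real.rpow_eq_zero (abs_nonneg s) (by linarith)).1 hs)

lemma IsBoundedProfile.gaussianEnergy_powerPotential_le {Φ : ℝ → ℝ} (hw : IsBoundedProfile Φ w)
    (hp : 1 < p) {M c κ : ℝ} (hM : ∀ y, |w y| ≤ M) (hc : 0 ≤ c) (hκ : 0 < κ)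
    (b : EuclideanSpace ℝ (Fin n)) :
    gaussianEnergy (powerPotential p c) w κ b ≤
      1 / 2 * (∫ y, ‖∇ w y‖ ^ 2 * gaussianDensity κ b y) + c / (2 * (p - 1)) * M ^ 2 := by
  have hpot := (contDiff_powerPotential hp c).continuous
  rw [hw.gaussianEnergy_eq hpot hκ]
  gcongr
  refine integral_mul_gaussianDensity_le hκ (hw.integrable_comp_mul_gaussianDensity hpot hκ b)
    fun y => ?_
  have : 0 < p - 1 := sub_pos.2 hp
  have : 0 < p + 1 := by linarith
  calc powerPotential p c (w y) ≤ c / (2 * (p - 1)) * w y ^ 2 := sub_le_self _ (by positivity)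
    _ ≤ c / (2 * (p - 1)) * M ^ 2 := by
      rw [← sq_abs (w y)]
      gcongr
      exact hM y

lemma IsBoundedProfile.exists_gaussianEnergy_powerPotential_le {Φ : ℝ → ℝ}
    (hw : IsBoundedProfile Φ w) (hp : 1 < p) (R : ℝ) :
    ∃ A, ∀ κ ≥ 1, ∀ b, ‖b‖ ^ 2 ≤ R → gaussianEnergy (powerPotential p (4 * κ)) w κ b ≤ A * κ := by
  obtain ⟨M, hM⟩ := hw.bounded
  obtain ⟨K, hK, hgrad⟩ := hw.exists_integral_norm_gradient_sq_le
  refine ⟨1 / 2 * (K * (3 + R)) + 4 / (2 * (p - 1)) * M ^ 2, fun κ hκ b hb => ?_⟩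
  have hκ₀ : 0 < κ := one_pos.trans_le hκ
  have hsum : 1 + ‖b‖ ^ 2 + κ + κ⁻¹ ≤ (3 + R) * κ := by
    nlinarith [inv_le_one_of_one_le₀ hκ, sq_nonneg ‖b‖]
  calc _ ≤ 1 / 2 * (∫ y, ‖∇ w y‖ ^ 2 * gaussianDensity κ b y) + 4 * κ / (2 * (p - 1)) * M ^ 2 :=
        hw.gaussianEnergy_powerPotential_le hp hM (by positivity) hκ₀ b
    _ ≤ 1 / 2 * (K * ((3 + R) * κ)) + 4 * κ / (2 * (p - 1)) * M ^ 2 := by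
        gcongr
        exact (hgrad κ hκ₀ b).2.trans (by gcongr)
    _ = _ := by ring

theorem IsBoundedProfile.nonpos_of_tendsto_GKenergy {Φ : ℝ → ℝ} (hw : IsBoundedProfile Φ w)
    (hp : 1 < p)
    (hu : ∀ x t, t < 0 → u x t = (-t) ^ (-(1 / (p - 1))) * w ((-t) ^ (-(1 / 2) : ℝ) • x))
    {t₀ : ℝ} (ht₀ : t₀ < 0)
    (hθ : Tendsto (fun s => GKenergy n p u s x₀ t₀) (𝓝[<] 0) (𝓝 θ)) : θ ≤ 0 := by
  obtain ⟨A, hA⟩ := hw.exists_gaussianEnergy_powerPotential_le hp ((-t₀)⁻¹ * ‖x₀‖ ^ 2)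
  have hratio := tendsto_add_div_self_nhdsLT_zero ht₀
  have hbound : Tendsto (fun s => A / 4 * ((t₀ + s) / s) ^ (-(2 / (p - 1)))) (𝓝[<] 0) (𝓝 0) := by
    have h : 0 < 2 / (p - 1) := div_pos two_pos (sub_pos.2 hp)
    simpa using ((tendsto_rpow_neg_atTop h).comp hratio).const_mul (A / 4)
  refine le_of_tendsto_of_tendsto hθ hbound ?_
  filter_upwards [self_mem_nhdsWithin, hratio.eventually_ge_atTop 4] with s (hs : s < 0) hr
  have ht : t₀ + s < 0 := add_neg ht₀ hs
  have hb : ‖(-(t₀ + s)) ^ (-(1 / 2) : ℝ) • x₀‖ ^ 2 ≤ (-t₀)⁻¹ * ‖x₀‖ ^ 2 := by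
    rw [norm_rpow_neg_half_smul_sq (neg_pos.2 ht).le]
    gcongr <;> linarith
  have henergy := hA ((t₀ + s) / s / 4) (by linarith) _ hb
  rw [mul_div_cancel₀ _ four_ne_zero] at henergy
  have hr₀ : (t₀ + s) / s ≠ 0 := by positivity
  rw [hw.GKenergy_eq hp hs ht rfl (fun x => hu x _ ht)]
  calc _ ≤ ((t₀ + s) / s) ^ (-((p + 1) / (p - 1))) * (A * ((t₀ + s) / s / 4)) := by gcongr
    _ = A / 4 * (((t₀ + s) / s) ^ (-((p + 1) / (p - 1))) * ((t₀ + s) / s)) := by ring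
    _ = _ := by rw [rpow_neg_add_one_div_mul_self hp.ne' hr₀]

lemma IsBoundedProfile.GKenergy_zero {Φ : ℝ → ℝ} (hw : IsBoundedProfile Φ w) (hp : 1 < p)
    (hu : ∀ x t, t < 0 → u x t = (-t) ^ (-(1 / (p - 1))) * w ((-t) ^ (-(1 / 2) : ℝ) • x))
    {s : ℝ} (hs : s < 0) (x₀ : EuclideanSpace ℝ (Fin n)) :
    GKenergy n p u s x₀ 0 =
      gaussianEnergy (powerPotential p 1) w (1 / 4) ((-s) ^ (-(1 / 2) : ℝ) • x₀) := by
  rw [hw.GKenergy_eq hp hs hs (zero_add s) (fun x => hu x s hs), div_self hs.ne, one_rpow, one_mul]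

lemma IsBoundedProfile.eq_gaussianEnergy_of_tendsto_GKenergy {Φ : ℝ → ℝ}
    (hw : IsBoundedProfile Φ w) (hp : 1 < p)
    (hu : ∀ x t, t < 0 → u x t = (-t) ^ (-(1 / (p - 1))) * w ((-t) ^ (-(1 / 2) : ℝ) • x))
    (hθ : Tendsto (fun s => GKenergy n p u s 0 0) (𝓝[<] 0) (𝓝 θ)) :
    gaussianEnergy (powerPotential p 1) w (1 / 4) 0 = θ := by
  refine tendsto_nhds_unique (tendsto_const_nhds.congr' ?_) hθ
  filter_upwards [self_mem_nhdsWithin] with s (hs : s < 0)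
  rw [hw.GKenergy_zero hp hu hs, smul_zero]

lemma IsBoundedProfile.tendsto_gaussianEnergy_of_tendsto_GKenergy {Φ : ℝ → ℝ}
    (hw : IsBoundedProfile Φ w) (hp : 1 < p)
    (hu : ∀ x t, t < 0 → u x t = (-t) ^ (-(1 / (p - 1))) * w ((-t) ^ (-(1 / 2) : ℝ) • x))
    (hθ : Tendsto (fun s => GKenergy n p u s x₀ 0) (𝓝[<] 0) (𝓝 θ)) :
    Tendsto (fun τ : ℝ => gaussianEnergy (powerPotential p 1) w (1 / 4) (τ • x₀)) atTop (𝓝 θ) := by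
  have htime : Tendsto (fun τ : ℝ => -(τ ^ 2)⁻¹) atTop (𝓝[<] 0) := by
    refine tendsto_nhdsWithin_iff.2 ⟨?_, ?_⟩
    · have h : Tendsto (fun τ : ℝ => τ ^ 2) atTop atTop := tendsto_pow_atTop two_ne_zero
      simpa using h.inv_tendsto_atTop.neg
    · filter_upwards [eventually_gt_atTop 0] with τ hτ
      exact Set.mem_Iio.2 (neg_neg_of_pos (by positivity))
  refine (hθ.comp htime).congr' ?_
  filter_upwards [eventually_gt_atTop 0] with τ hτ
  have hroot : (-(-(τ ^ 2)⁻¹)) ^ (-(1 / 2) : ℝ) = τ := by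
    rw [neg_neg, Real.inv_rpow (by positivity), Real.rpow_neg (by positivity), inv_inv,
      ← Real.sqrt_eq_rpow, Real.sqrt_sq hτ.le]
  rw [Function.comp_apply, hw.GKenergy_zero hp hu (neg_neg_of_pos (by positivity)), hroot]

end Density

theorem selfsimilar_translation_invariance_general
    (n : ℕ) (p : ℝ) (hp : 1 < p) (w : EuclideanSpace ℝ (Fin n) → ℝ)
    (hsmooth : ContDiff ℝ 2 w)
    (hbd : ∃ M : ℝ, ∀ y, |w y| ≤ M)
    (heq : ∀ y, lap w y - (1 / 2) * fderiv ℝ w y y - w y / (p - 1)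
        + |w y| ^ (p - 1) * w y = 0)
    (u : EuclideanSpace ℝ (Fin n) → ℝ → ℝ)
    (hu : ∀ (x : EuclideanSpace ℝ (Fin n)) (t : ℝ), t < 0 →
        u x t = (-t) ^ (-(1 / (p - 1))) * w (((-t) ^ (-(1 / 2) : ℝ)) • x))
    (x₀ : EuclideanSpace ℝ (Fin n)) (t₀ : ℝ) (ht₀ : t₀ ≤ 0) (θ₀ θ₁ : ℝ) (hθ : θ₀ ≤ θ₁)
    (hΘ0 : Tendsto (fun s => GKenergy n p u s 0 0) (nhdsWithin 0 (Set.Iio 0)) (nhds θ₀))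
    (hΘ1 : Tendsto (fun s => GKenergy n p u s x₀ t₀) (nhdsWithin 0 (Set.Iio 0)) (nhds θ₁)) :
    ∀ (a : ℝ) (x : EuclideanSpace ℝ (Fin n)) (t : ℝ), t < 0 →
      u (a • x₀ + x) (a ^ 2 * t₀ + t) = u x t := by
  intro a x t ht
  have hw := isBoundedProfile_powerPotential hp hsmooth hbd heq
  have hcentre := hw.eq_gaussianEnergy_of_tendsto_GKenergy hp hu hΘ0
  rcases ht₀.lt_or_eq with ht₀ | rfl
  · have hθ₁ := hw.nonpos_of_tendsto_GKenergy hp hu ht₀ hΘ1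
    have hzero : w = 0 := eq_zero_of_gaussianEnergy_powerPotential_nonpos hp hw (by linarith)
    have ht' : a ^ 2 * t₀ + t < 0 := by nlinarith [sq_nonneg a]
    rw [hu _ _ ht', hu _ _ ht, hzero]
    simp
  · have hgrad := hw.inner_gradient_eq_zero_of_tendsto
      (hw.tendsto_gaussianEnergy_of_tendsto_GKenergy hp hu hΘ1) (hcentre.trans_le hθ)
    rw [mul_zero, zero_add, hu _ _ ht, hu _ _ ht, smul_add, smul_smul,
      apply_smul_add_eq_of_inner_gradient_eq_zero (hsmooth.differentiable two_ne_zero) hgrad]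

/-- If the Giga–Kohn density of the backward self-similar solution
`u(x,t) = (-t)^{-1/(p-1)} w(x/√(-t))` at `(x₀,t₀)` equals the density at
`(0,0)`, then `u(a x₀ + x, a² t₀ + t) = u(x,t)` for all `a ∈ ℝ` and
`(x,t) ∈ ℝ^n × (-∞,0)`. -/
theorem selfsimilar_translation_invariance
    (n : ℕ) (p : ℝ) (hp : 1 < p) (w : EuclideanSpace ℝ (Fin n) → ℝ)
    (hsmooth : ContDiff ℝ (⊤ : ℕ∞) w)
    (hbd : ∃ M : ℝ, ∀ y, |w y| ≤ M)
    (heq : ∀ y, lap w y - (1 / 2) * fderiv ℝ w y y - w y / (p - 1)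
        + |w y| ^ (p - 1) * w y = 0)
    (u : EuclideanSpace ℝ (Fin n) → ℝ → ℝ)
    (hu : ∀ (x : EuclideanSpace ℝ (Fin n)) (t : ℝ), t < 0 →
        u x t = (-t) ^ (-(1 / (p - 1))) * w (((-t) ^ (-(1 / 2) : ℝ)) • x))
    (x₀ : EuclideanSpace ℝ (Fin n)) (t₀ : ℝ) (ht₀ : t₀ ≤ 0) (θ : ℝ)
    (hΘ0 : Tendsto (fun s => GKenergy n p u s 0 0) (nhdsWithin 0 (Set.Iio 0)) (nhds θ))
    (hΘ1 : Tendsto (fun s => GKenergy n p u s x₀ t₀) (nhdsWithin 0 (Set.Iio 0)) (nhds θ)) :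
    ∀ (a : ℝ) (x : EuclideanSpace ℝ (Fin n)) (t : ℝ), t < 0 →
      u (a • x₀ + x) (a ^ 2 * t₀ + t) = u x t :=
  selfsimilar_translation_invariance_general n p hp w (contDiff_infty.1 hsmooth 2) hbd heq u hu x₀
    t₀ ht₀ θ θ le_rfl hΘ0 hΘ1
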